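/- arXiv:2402.10199 — 2 statements merged into one kernel-verified Lean document; each statement's English description precedes it below -/
import Mathlib

section
/- Assume Setting (C) and let μ ∈ M(X, σ_X) be an invariant Gibbs measure for f. Suppose the 2×2 submatrix M_{22}|_{π^{-1}(22)} is not of the form [[0, a₁],[a₂, 0]] with a₁, a₂ > 0. Then: the sequence 𝓖 = {log g_n} is almost additive on Y if and only if there exists a continuous function ĝ on Y for which the push-forward measure πμ is the unique invariant Gibbs measure for ĝ; moreover, if 𝓖 is merely weakly almost additive on Y, then there exists a continuous function ĝ on Y for which πμ is the unique invariant weak Gibbs measure for ĝ. -/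
open MeasureTheory Filter Topology

noncomputable section

/-- The one-sided shift map. -/
def shift {A : Type*} : (ℕ → A) → ℕ → A := fun x i => x (i + 1)

/-- A finite word appears in some point of `X`. -/
def AppearsIn {A : Type*} (X : Set (ℕ → A)) (w : List A) : Prop :=
  ∃ x ∈ X, ∃ m : ℕ, ∀ i : Fin w.length, x (m + i) = w.get i

/-- `X` is a (one-sided) subshift: a closed, shift-invariant set. -/
def IsSubshift {A : Type*} [TopologicalSpace A] (X : Set (ℕ → A)) : Prop :=
  IsClosed X ∧ shift '' X ⊆ X

/-- The weak specification property. -/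
def WeakSpec {A : Type*} (X : Set (ℕ → A)) : Prop :=
  ∃ p : ℕ, ∀ u v : List A, AppearsIn X u → AppearsIn X v →
    ∃ w : List A, w.length ≤ p ∧ AppearsIn X (u ++ w ++ v)

/-- The cylinder set `[x_1 … x_n]` inside `X`. -/
def cyl {A : Type*} (X : Set (ℕ → A)) (x : ℕ → A) (n : ℕ) : Set (ℕ → A) :=
  {z ∈ X | ∀ i < n, z i = x i}

/-- Birkhoff sum `(S_n g)(x)`. -/
def birk {A : Type*} (g : (ℕ → A) → ℝ) (n : ℕ) (x : ℕ → A) : ℝ :=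
  ∑ i ∈ Finset.range n, g (shift^[i] x)

/-- `μ` is a shift-invariant Borel probability measure concentrated on `X`,
i.e. an element of `M(X, σ_X)`. -/
def IsInvariantOn {A : Type*} [MeasurableSpace A] (μ : Measure (ℕ → A))
    (X : Set (ℕ → A)) : Prop :=
  IsProbabilityMeasure μ ∧ μ X = 1 ∧
    ∀ B : Set (ℕ → A), MeasurableSet B → μ (shift ⁻¹' B) = μ B

/-- `μ` is a Gibbs measure for the sequence `𝓕 = {log f_n}`. -/
def GibbsSeq {A : Type*} [MeasurableSpace A] (X : Set (ℕ → A))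
    (f : ℕ → (ℕ → A) → ℝ) (μ : Measure (ℕ → A)) : Prop :=
  ∃ P C : ℝ, 0 < C ∧ ∀ x ∈ X, ∀ n : ℕ, 1 ≤ n →
    C⁻¹ ≤ (μ (cyl X x n)).toReal / (Real.exp (-(n : ℝ) * P) * f n x) ∧
    (μ (cyl X x n)).toReal / (Real.exp (-(n : ℝ) * P) * f n x) ≤ C

/-- `μ` is a weak Gibbs measure for the sequence `𝓕 = {log f_n}`. -/
def WeakGibbsSeq {A : Type*} [MeasurableSpace A] (X : Set (ℕ → A))
    (f : ℕ → (ℕ → A) → ℝ) (μ : Measure (ℕ → A)) : Prop :=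
  ∃ P : ℝ, ∃ C : ℕ → ℝ, (∀ n : ℕ, 1 ≤ n → 0 < C n) ∧
    Tendsto (fun n : ℕ => Real.log (C n) / n) atTop (𝓝 0) ∧
    ∀ x ∈ X, ∀ n : ℕ, 1 ≤ n →
      (C n)⁻¹ ≤ (μ (cyl X x n)).toReal / (Real.exp (-(n : ℝ) * P) * f n x) ∧
      (μ (cyl X x n)).toReal / (Real.exp (-(n : ℝ) * P) * f n x) ≤ C n

/-- `μ` is a Gibbs measure for the (Borel measurable) function `g`. -/
def GibbsFun {A : Type*} [MeasurableSpace A] (X : Set (ℕ → A))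
    (g : (ℕ → A) → ℝ) (μ : Measure (ℕ → A)) : Prop :=
  GibbsSeq X (fun n x => Real.exp (birk g n x)) μ

/-- `μ` is a weak Gibbs measure for the (Borel measurable) function `g`. -/
def WeakGibbsFun {A : Type*} [MeasurableSpace A] (X : Set (ℕ → A))
    (g : (ℕ → A) → ℝ) (μ : Measure (ℕ → A)) : Prop :=
  WeakGibbsSeq X (fun n x => Real.exp (birk g n x)) μ

/-- The sequence `{log f_n}` is almost additive on `X` with constant `C`. -/
def AAOn {A : Type*} (X : Set (ℕ → A)) (f : ℕ → (ℕ → A) → ℝ) (C : ℝ) : Prop :=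
  ∀ x ∈ X, ∀ n m : ℕ, 1 ≤ n → 1 ≤ m →
    Real.exp (-C) * (f n x * f m (shift^[n] x)) ≤ f (n + m) x ∧
    f (n + m) x ≤ Real.exp C * (f n x * f m (shift^[n] x))

/-- The sequence `{log f_n}` is weakly almost additive on `X`. -/
def WeakAAOn {A : Type*} (X : Set (ℕ → A)) (f : ℕ → (ℕ → A) → ℝ) : Prop :=
  ∃ C : ℕ → ℝ, (∀ n : ℕ, 1 ≤ n → 0 < C n) ∧
    Tendsto (fun n : ℕ => C n / n) atTop (𝓝 0) ∧
    ∀ x ∈ X, ∀ n m : ℕ, 1 ≤ n → 1 ≤ m →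
      Real.exp (-(C n)) * (f n x * f m (shift^[n] x)) ≤ f (n + m) x ∧
      f (n + m) x ≤ Real.exp (C n) * (f n x * f m (shift^[n] x))

open scoped Classical

/-- `g_n(y) = sup_{E_n(y)} Σ_{x ∈ E_n(y)} e^{(S_n f)(x)}`: the sum, over all `n`-blocks
of `X` projecting to `y_1…y_n`, of the sup of `e^{S_n f}` over the corresponding
cylinder. -/
noncomputable def gseq {kX kY : ℕ} (X : Set (ℕ → Fin kX)) (πs : Fin kX → Fin kY)
    (f : (ℕ → Fin kX) → ℝ) (n : ℕ) (y : ℕ → Fin kY) : ℝ :=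
  ∑ u : Fin n → Fin kX,
    if ((∃ x ∈ X, ∀ i : Fin n, x ↑i = u i) ∧ ∀ i : Fin n, πs (u i) = y ↑i) then
      ⨆ x : ↥{z ∈ X | ∀ i : Fin n, z ↑i = u i}, Real.exp (birk f n ↑x)
    else 0

/-- `h_n(y) = sup_{E_n(y)} Σ_{x ∈ E_n(y)} e^{(S_{n-1} f)(x)}` for `n ≥ 2`, and
`h_1 = g_1`. -/
noncomputable def hseqS {kX kY : ℕ} (X : Set (ℕ → Fin kX)) (πs : Fin kX → Fin kY)
    (f : (ℕ → Fin kX) → ℝ) (n : ℕ) (y : ℕ → Fin kY) : ℝ :=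
  if n ≤ 1 then gseq X πs f n y
  else
    ∑ u : Fin n → Fin kX,
      if ((∃ x ∈ X, ∀ i : Fin n, x ↑i = u i) ∧ ∀ i : Fin n, πs (u i) = y ↑i) then
        ⨆ x : ↥{z ∈ X | ∀ i : Fin n, z ↑i = u i}, Real.exp (birk f (n - 1) ↑x)
      else 0

/-- Irreducibility of a subshift: any two words appearing in `X` can be connected. -/
def IrreducibleShift {A : Type*} (X : Set (ℕ → A)) : Prop :=
  ∀ u v : List A, AppearsIn X u → AppearsIn X v →
    ∃ w : List A, AppearsIn X (u ++ w ++ v)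

/-- For a factor map collapsing all symbols except `0`, and a two-coordinate potential
given by `F`: `h_n(y)` is the sum over `n`-blocks `x_1…x_n` of `X` with
`π(x_1)…π(x_n) = y_1…y_n` of `e^{F(x_1,x_2)+⋯+F(x_{n-1},x_n)}` (for `n ≥ 2`), and
`h_1(y) = Σ_{a : π(a) = y_1} sup_{x ∈ [a]} e^{f(x)}`. -/
noncomputable def hseqC {l : ℕ} (X : Set (ℕ → Fin l)) (πs : Fin l → Fin 2)
    (F : Fin l → Fin l → ℝ) (f : (ℕ → Fin l) → ℝ) (n : ℕ) (y : ℕ → Fin 2) : ℝ :=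
  if n ≤ 1 then
    ∑ a : Fin l,
      if πs a = y 0 then (⨆ x : ↥{z ∈ X | z 0 = a}, Real.exp (f ↑x)) else 0
  else
    ∑ u : Fin n → Fin l,
      if ((∃ x ∈ X, ∀ i : Fin n, x ↑i = u i) ∧ ∀ i : Fin n, πs (u i) = y ↑i) then
        Real.exp (∑ i : Fin n,
          if h : (↑i + 1 : ℕ) < n then F (u i) (u ⟨↑i + 1, h⟩) else 0)
      else 0

/-- The one-block map of Setting (C): symbol `1` (here `0`) goes to `1` (here `0`),
symbols `2, 3` (here `1, 2`) go to `2` (here `1`). -/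
def projC {l : ℕ} : Fin l → Fin 2 := fun a => if (a : ℕ) = 0 then 0 else 1

/-- The matrix `M(i,j) = e^{f[ij]} a_{ij}` of Setting (C). -/
noncomputable def MC {l : ℕ} (A : Fin l → Fin l → ℕ) (F : Fin l → Fin l → ℝ) :
    Fin l → Fin l → ℝ := fun i j => Real.exp (F i j) * (A i j : ℝ)

/-- Similarity of `2 × 2` real matrices. -/
def Similar2 (M N : Matrix (Fin 2) (Fin 2) ℝ) : Prop :=
  ∃ P : Matrix (Fin 2) (Fin 2) ℝ, IsUnit P.det ∧ N = P⁻¹ * M * P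

/-!
Since `μ` is Gibbs for `f`, the push-forward `πμ` satisfies Gibbs bounds with respect to `log g_n`,
so everything reduces to comparing `log g_n` with Birkhoff sums.

The symbol `0` has a single preimage, so `g_n` factors at its occurrences, and the increment
`log g_{m+1}(y) - log g_m(σ y)` depends only on `y` up to its first return to `0`. This defines `ĝ`
away from the points that never return. The normalized weights of the returns through `1^k 0`
follow a nonnegative planar linear recursion with matrix `M₂₂`, whose direction converges precisely
because `M₂₂` is not antidiagonal; this gives the continuous extension of `ĝ`. On a dense set the
Birkhoff sums of `ĝ` telescope to `log g_{n+m}(y) - log g_m(σⁿ y)`, so (weak) almost additivity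
keeps them within `C_n` of `log g_n`. Conversely, if `πμ` is Gibbs for a function, then `log g_n`
is within a constant of an additive sequence.

For uniqueness, `πμ` is ergodic and submultiplicative on cylinders up to a constant. The
divergences of the word distributions of another weak Gibbs measure `ν` from those of `πμ` are
therefore almost superadditive, and they are sublinear, hence bounded. This forces `ν ≪ πμ`, and
ergodicity gives `ν = πμ`.
-/

/-! ### Words, cylinders and shifts of finite type -/

section Words

variable {α : Type*}

/-- The word formed by the first `n` symbols of a sequence. -/
def initialWord (n : ℕ) (x : ℕ → α) : Fin n → α := fun i => x i

/-- The cylinder of all sequences (not only those of a given subshift) starting with the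
word `u`. -/
def wordCyl {n : ℕ} (u : Fin n → α) : Set (ℕ → α) := {x | ∀ i : Fin n, x i = u i}

theorem mem_wordCyl {n : ℕ} {u : Fin n → α} {x : ℕ → α} :
    x ∈ wordCyl u ↔ ∀ i : Fin n, x i = u i := Iff.rfl

theorem mem_wordCyl_iff_initialWord_eq {n : ℕ} {u : Fin n → α} {x : ℕ → α} :
    x ∈ wordCyl u ↔ initialWord n x = u := funext_iff.symm

theorem initialWord_preimage_singleton {n : ℕ} (u : Fin n → α) :
    initialWord n ⁻¹' {u} = wordCyl u :=
  Set.ext fun _ => mem_wordCyl_iff_initialWord_eq.symm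

theorem initialWord_eq_initialWord_iff {n : ℕ} {x z : ℕ → α} :
    initialWord n z = initialWord n x ↔ ∀ i < n, z i = x i :=
  funext_iff.trans Fin.forall_iff

theorem wordCyl_initialWord_subset {m n : ℕ} (hmn : m ≤ n) (x : ℕ → α) :
    wordCyl (initialWord n x) ⊆ wordCyl (initialWord m x) :=
  fun _ hz i => hz (i.castLE hmn)

theorem shift_iterate_apply (n : ℕ) (x : ℕ → α) (i : ℕ) : shift^[n] x i = x (n + i) := by
  induction n generalizing x with
  | zero => simp
  | succ n ih => rw [Function.iterate_succ_apply, ih, shift, add_right_comm]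

theorem wordCyl_append {n l : ℕ} (u : Fin n → α) (v : Fin l → α) :
    wordCyl (Fin.append u v) = wordCyl u ∩ shift^[n] ⁻¹' wordCyl v := by
  ext x
  simp [mem_wordCyl, Fin.forall_fin_add, shift_iterate_apply]

theorem initialWord_add (n l : ℕ) (x : ℕ → α) :
    initialWord (n + l) x = Fin.append (initialWord n x) (initialWord l (shift^[n] x)) := by
  funext i
  refine Fin.addCases (fun i => ?_) (fun i => ?_) i <;>
    simp [initialWord, shift_iterate_apply]

theorem append_eq_append_iff {n l : ℕ} {u u' : Fin n → α} {v v' : Fin l → α} :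
    Fin.append u v = Fin.append u' v' ↔ u = u' ∧ v = v' := by
  simp [funext_iff, Fin.forall_fin_add]

theorem sum_words_append [Fintype α] {n l : ℕ} (g : (Fin (n + l) → α) → ℝ) :
    ∑ w, g w = ∑ u : Fin n → α, ∑ v : Fin l → α, g (Fin.append u v) := by
  rw [← Fintype.sum_prod_type' (f := fun u v => g (Fin.append u v))]
  exact ((Fin.appendEquiv n l).sum_comp g).symm

theorem sum_words_cons [Fintype α] {n : ℕ} (g : (Fin (n + 1) → α) → ℝ) :
    ∑ w, g w = ∑ i : α, ∑ v : Fin n → α, g (Fin.cons i v) := by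
  rw [← Fintype.sum_prod_type' (f := fun i v => g (Fin.cons i v))]
  exact ((Fin.consEquiv fun _ => α).sum_comp g).symm

theorem birk_add (g : (ℕ → α) → ℝ) (n m : ℕ) (x : ℕ → α) :
    birk g (n + m) x = birk g n x + birk g m (shift^[n] x) := by
  simp only [birk, Finset.sum_range_add, ← Function.iterate_add_apply, add_comm]

theorem birk_succ (g : (ℕ → α) → ℝ) (n : ℕ) (x : ℕ → α) :
    birk g (n + 1) x = g x + birk g n (shift x) := by
  rw [birk, Finset.sum_range_succ', add_comm]
  rfl

theorem abs_birk_le {g : (ℕ → α) → ℝ} {R : ℝ} (hR : ∀ x, |g x| ≤ R) (n : ℕ) (x : ℕ → α) :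
    |birk g n x| ≤ n * R :=
  (Finset.abs_sum_le_sum_abs _ _).trans <|
    (Finset.sum_le_sum fun _ _ => hR _).trans_eq (by simp)

end Words

section ShiftOfFiniteType

variable {α : Type*} {R : α → α → Prop}

/-- The one-step shift of finite type whose allowed transitions are given by `R`. -/
def sft (R : α → α → Prop) : Set (ℕ → α) := {x | ∀ n, R (x n) (x (n + 1))}

theorem shift_mem_sft {x : ℕ → α} (hx : x ∈ sft R) : shift x ∈ sft R := fun n => hx (n + 1)

theorem shift_iterate_mem_sft {x : ℕ → α} (hx : x ∈ sft R) (n : ℕ) : shift^[n] x ∈ sft R := by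
  induction n with
  | zero => exact hx
  | succ n ih => rw [Function.iterate_succ_apply']; exact shift_mem_sft ih

/-- The first `n` symbols of `x` followed by the sequence `x'`. -/
def splice (n : ℕ) (x x' : ℕ → α) : ℕ → α := fun t => if t < n then x t else x' (t - n)

theorem splice_of_lt {n t : ℕ} (h : t < n) (x x' : ℕ → α) : splice n x x' t = x t := if_pos h

theorem splice_add (n t : ℕ) (x x' : ℕ → α) : splice n x x' (n + t) = x' t := by
  simp [splice]

theorem shift_iterate_splice (n : ℕ) (x x' : ℕ → α) : shift^[n] (splice n x x') = x' :=
  funext fun t => by rw [shift_iterate_apply, splice_add]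

theorem splice_mem_sft {n : ℕ} {x x' : ℕ → α} (hx : ∀ t, t + 1 < n → R (x t) (x (t + 1)))
    (hjoin : ∀ t, t + 1 = n → R (x t) (x' 0)) (hx' : x' ∈ sft R) : splice n x x' ∈ sft R := by
  intro t
  rcases lt_trichotomy (t + 1) n with h | h | h
  · rw [splice_of_lt h, splice_of_lt (by omega)]
    exact hx t h
  · subst h
    simpa [splice] using hjoin t rfl
  · obtain ⟨s, rfl⟩ : ∃ s, t = n + s := ⟨t - n, by omega⟩
    rw [add_assoc, splice_add, splice_add]
    exact hx' s

theorem IrreducibleShift.exists_gap {X : Set (ℕ → α)} (hX : IrreducibleShift X) (i j : α) :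
    ∃ L : ℕ, ∀ x ∈ X, ∀ x' ∈ X, i ∈ Set.range x → j ∈ Set.range x' →
      ∃ w ∈ X, ∃ m, w m = i ∧ w (m + 1 + L) = j := by
  have appears : ∀ {a : α} {x : ℕ → α}, x ∈ X → a ∈ Set.range x → AppearsIn X [a] := by
    rintro _ x hx ⟨t, rfl⟩
    exact ⟨x, hx, t, by simp⟩
  by_cases h : AppearsIn X [i] ∧ AppearsIn X [j]
  · obtain ⟨l, w, hw, m, hm⟩ := hX [i] [j] h.1 h.2
    refine ⟨l.length, fun _ _ _ _ _ _ => ⟨w, hw, m, by simpa using hm ⟨0, by simp⟩, ?_⟩⟩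
    simpa [add_assoc, List.getElem_append, add_comm 1] using hm ⟨1 + l.length, by simp; omega⟩
  · exact ⟨0, fun x hx x' hx' hi hj => absurd ⟨appears hx hi, appears hx' hj⟩ h⟩

theorem exists_bounded_connection [Finite α] (hX : IrreducibleShift (sft R)) :
    ∃ p, ∀ x ∈ sft R, ∀ x' ∈ sft R, ∀ n, 1 ≤ n → ∃ L ≤ p, ∃ z ∈ sft R,
      (∀ i < n, z i = x i) ∧ shift^[n + L] z = x' := by
  have := Fintype.ofFinite α
  choose gap hgap using hX.exists_gap
  refine ⟨Finset.univ.sup fun q : α × α => gap q.1 q.2, fun x hx x' hx' n hn => ?_⟩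
  obtain ⟨n, rfl⟩ := Nat.exists_eq_add_of_le' hn
  obtain ⟨w, hw, m, hwm, hwL⟩ := hgap (x n) (x' 0) x hx x' hx' ⟨n, rfl⟩ ⟨0, rfl⟩
  set L := gap (x n) (x' 0)
  have bridge : splice L (shift^[m + 1] w) x' ∈ sft R := by
    refine splice_mem_sft (fun t _ => shift_iterate_mem_sft hw _ t) (fun t ht => ?_) hx'
    rw [← hwL, ← ht, shift_iterate_apply]
    exact hw _
  have bridge_zero : splice L (shift^[m + 1] w) x' 0 = w (m + 1) := by
    rcases Nat.eq_zero_or_pos L with h | h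
    · rw [h, add_zero] at hwL
      rw [h, hwL]
      exact splice_add 0 0 _ _
    · rw [splice_of_lt h, shift_iterate_apply, add_zero]
  refine ⟨L, Finset.le_sup (f := fun q : α × α => gap q.1 q.2) (Finset.mem_univ (x n, x' 0)),
    splice (n + 1) x (splice L (shift^[m + 1] w) x'), ?_, fun i hi => splice_of_lt hi _ _, ?_⟩
  · refine splice_mem_sft (fun t _ => hx t) (fun t ht => ?_) bridge
    obtain rfl : t = n := by omega
    rw [bridge_zero, ← hwm]
    exact hw m
  · rw [add_comm, Function.iterate_add_apply, shift_iterate_splice, shift_iterate_splice]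

end ShiftOfFiniteType

section Measurability

variable {α : Type*} [MeasurableSpace α]

theorem measurable_shift : Measurable (shift : (ℕ → α) → ℕ → α) :=
  measurable_pi_lambda _ fun _ => measurable_pi_apply _

theorem measurable_initialWord (n : ℕ) : Measurable (initialWord n : (ℕ → α) → Fin n → α) :=
  measurable_pi_lambda _ fun _ => measurable_pi_apply _

theorem measurableSet_wordCyl [MeasurableSingletonClass α] {n : ℕ} (u : Fin n → α) :
    MeasurableSet (wordCyl u) := by
  rw [← initialWord_preimage_singleton]
  exact measurable_initialWord n (measurableSet_singleton u)

theorem measurableSet_sft [Finite α] [MeasurableSingletonClass α] (R : α → α → Prop) :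
    MeasurableSet (sft R) := by
  rw [sft, Set.ofPred_forall]
  have measurable_pair : ∀ n, Measurable fun x : ℕ → α => (x n, x (n + 1)) := fun n =>
    (measurable_pi_apply n).prodMk (measurable_pi_apply (n + 1))
  exact .iInter fun n =>
    measurable_pair n (Set.toFinite {q : α × α | R q.1 q.2}).measurableSet

theorem sum_measureReal_wordCyl_inter [Fintype α] [MeasurableSingletonClass α]
    (ν : Measure (ℕ → α)) [IsFiniteMeasure ν] (n : ℕ) (B : Set (ℕ → α)) :
    ∑ u : Fin n → α, ν.real (wordCyl u ∩ B) = ν.real B := by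
  have h := sum_measureReal_preimage_singleton (μ := ν.restrict B) Finset.univ
    (f := initialWord n) fun u _ => measurable_initialWord n (measurableSet_singleton u)
  simpa [initialWord_preimage_singleton, measureReal_restrict_apply,
    measurableSet_wordCyl] using h

theorem sum_measureReal_wordCyl [Fintype α] [MeasurableSingletonClass α]
    (ν : Measure (ℕ → α)) [IsProbabilityMeasure ν] (n : ℕ) :
    ∑ u : Fin n → α, ν.real (wordCyl u) = 1 := by
  simpa using sum_measureReal_wordCyl_inter ν n Set.univ

theorem exists_initialWord_eq_of_measure_ne_zero {X : Set (ℕ → α)} {μ : Measure (ℕ → α)}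
    (hX : ∀ᵐ x ∂μ, x ∈ X) {n : ℕ} {u : Fin n → α} (hu : μ (wordCyl u) ≠ 0) :
    ∃ x ∈ X, initialWord n x = u := by
  by_contra! h
  exact hu (measure_mono_null
    (fun x hx hxX => h x hxX (mem_wordCyl_iff_initialWord_eq.1 hx)) (ae_iff.1 hX))

end Measurability

/-! ### Comparing measures through cylinders -/

section InnerApproximation

variable {α : Type*}

theorem measure_initialWord_preimage [Countable α] [MeasurableSpace α] [MeasurableSingletonClass α]
    (μ : Measure (ℕ → α)) {n : ℕ} (S : Finset (Fin n → α)) :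
    μ (initialWord n ⁻¹' S) = ∑ u ∈ S, μ (wordCyl u) := by
  simp only [← initialWord_preimage_singleton]
  exact (sum_measure_preimage_singleton S fun u _ =>
    measurable_initialWord n (measurableSet_singleton u)).symm

theorem exists_finset_words_tendsto_measure [Finite α] [TopologicalSpace α]
    [DiscreteTopology α] [MeasurableSpace α] {U : Set (ℕ → α)} (hU : IsOpen U) :
    ∃ S : (n : ℕ) → Finset (Fin (n + 1) → α), ∀ μ : Measure (ℕ → α),
      Tendsto (fun n => μ (initialWord (n + 1) ⁻¹' S n)) atTop (𝓝 (μ U)) := by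
  have := Fintype.ofFinite α
  let S (n : ℕ) : Finset (Fin (n + 1) → α) := {u | wordCyl u ⊆ U}
  have mem_S : ∀ n x, x ∈ initialWord (n + 1) ⁻¹' (S n : Set (Fin (n + 1) → α)) ↔
      wordCyl (initialWord (n + 1) x) ⊆ U := by simp [S]
  have mono : Monotone fun n => initialWord (n + 1) ⁻¹' (S n : Set (Fin (n + 1) → α)) := by
    intro a b hab x hx
    rw [mem_S] at hx ⊢
    exact (wordCyl_initialWord_subset (by omega) x).trans hx
  have iUnion_eq : ⋃ n, initialWord (n + 1) ⁻¹' (S n : Set (Fin (n + 1) → α)) = U := by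
    refine Set.Subset.antisymm (Set.iUnion_subset fun n x hx => (mem_S n x).1 hx fun _ => rfl)
      fun x hx => ?_
    obtain ⟨I, V, hV, hVU⟩ := isOpen_pi_iff.1 hU x hx
    refine Set.mem_iUnion.2 ⟨I.sup id, (mem_S _ _).2 fun z hz => hVU fun i hi => ?_⟩
    have hzx : z i = x i := hz ⟨i, Nat.lt_succ_of_le (Finset.le_sup (f := id) hi)⟩
    exact hzx ▸ (hV i hi).2
  exact ⟨S, fun μ => iUnion_eq ▸ tendsto_measure_iUnion_atTop mono⟩

variable [Finite α] [TopologicalSpace α] [DiscreteTopology α] [MeasurableSpace α]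
  [BorelSpace α]

theorem measure_le_of_wordCyl_le {μ₁ μ₂ : Measure (ℕ → α)} [IsFiniteMeasure μ₂]
    (h : ∀ n, 1 ≤ n → ∀ u : Fin n → α, μ₁ (wordCyl u) ≤ μ₂ (wordCyl u)) : μ₁ ≤ μ₂ := by
  have open_le : ∀ U, IsOpen U → μ₁ U ≤ μ₂ U := by
    intro U hU
    obtain ⟨S, hS⟩ := exists_finset_words_tendsto_measure hU
    refine le_of_tendsto_of_tendsto' (hS μ₁) (hS μ₂) fun n => ?_
    simp only [measure_initialWord_preimage]
    exact Finset.sum_le_sum fun u _ => h _ (Nat.le_add_left 1 n) u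
  refine Measure.le_iff'.2 fun B => ?_
  rw [B.measure_eq_iInf_isOpen μ₂]
  exact le_iInf₂ fun U hBU => le_iInf fun hU => (measure_mono hBU).trans (open_le U hU)

-- Letting `m U → 0` along open `U ⊇ B` with `t = 1 / m U` forces `ν B = 0` whenever `m B = 0`.
theorem absolutelyContinuous_of_mul_log_le {ν m : Measure (ℕ → α)} [IsFiniteMeasure ν]
    [IsFiniteMeasure m] {K : ℝ}
    (h : ∀ n, 1 ≤ n → ∀ S : Finset (Fin n → α), ∀ t : ℝ, 1 ≤ t →
      ν.real (initialWord n ⁻¹' S) * Real.log t ≤ K + t * m.real (initialWord n ⁻¹' S)) :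
    ν ≪ m := by
  have open_le : ∀ U, IsOpen U → ∀ t : ℝ, 1 ≤ t →
      ν.real U * Real.log t ≤ K + t * m.real U := by
    intro U hU t ht
    obtain ⟨S, hS⟩ := exists_finset_words_tendsto_measure hU
    have hν := (ENNReal.tendsto_toReal (measure_ne_top ν U)).comp (hS ν)
    have hm := (ENNReal.tendsto_toReal (measure_ne_top m U)).comp (hS m)
    exact le_of_tendsto_of_tendsto' (hν.mul_const _) ((hm.const_mul t).const_add K)
      fun n => h _ (Nat.le_add_left 1 n) _ t ht
  intro B hB
  have log_le : ∀ t : ℝ, 1 ≤ t → ν.real B * Real.log t ≤ K + 1 := by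
    intro t ht
    have ht0 : 0 < t := by linarith
    obtain ⟨U, hBU, hU, hmU⟩ := B.exists_isOpen_lt_of_lt (μ := m) (ENNReal.ofReal (1 / t))
      (by rw [hB]; simpa using ht0)
    have mU_le : m.real U ≤ 1 / t := ENNReal.toReal_le_of_le_ofReal (by positivity) hmU.le
    calc ν.real B * Real.log t ≤ ν.real U * Real.log t := by
          gcongr
          exacts [Real.log_nonneg ht, measure_ne_top ν U]
      _ ≤ K + t * m.real U := open_le U hU t ht
      _ ≤ K + t * (1 / t) := by gcongr
      _ = K + 1 := by rw [mul_one_div_cancel ht0.ne']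
  by_contra hνB
  have pos : 0 < ν.real B := ENNReal.toReal_pos hνB (measure_ne_top _ _)
  have := log_le (Real.exp ((|K| + 2) / ν.real B)) (Real.one_le_exp (by positivity))
  rw [Real.log_exp, mul_div_cancel₀ _ pos.ne'] at this
  linarith [le_abs_self K]

end InnerApproximation

section WordDivergence

theorem mul_log_add_sub_le_mul_log_div {x y t : ℝ} (hx : 0 ≤ x) (hy : 0 ≤ y)
    (hxy : y = 0 → x = 0) (ht : 0 < t) :
    x * Real.log t + x - t * y ≤ x * Real.log (x / y) := by
  rcases hx.eq_or_lt with rfl | hx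
  · simpa using by positivity
  · have hy : 0 < y := hy.lt_of_ne fun h => hx.ne' (hxy h.symm)
    have log_le := Real.log_le_sub_one_of_pos (show 0 < t * y / x by positivity)
    rw [Real.log_div (by positivity) hx.ne', Real.log_mul ht.ne' hy.ne'] at log_le
    have := mul_le_mul_of_nonneg_left log_le hx.le
    rw [mul_sub, mul_sub, mul_div_cancel₀ _ hx.ne'] at this
    rw [Real.log_div hx.ne' hy.ne']
    linarith

theorem le_of_superadditive_of_le_sublinear {D ε : ℕ → ℝ} {K : ℝ}
    (hD : ∀ n l, 1 ≤ n → 1 ≤ l → D n + D l - K ≤ D (n + l)) (hDε : ∀ n, 1 ≤ n → D n ≤ ε n)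
    (hε : Tendsto (fun n : ℕ => ε n / n) atTop (𝓝 0)) {n : ℕ} (hn : 1 ≤ n) : D n ≤ K := by
  have iterate : ∀ j : ℕ, ((j : ℝ) + 1) * (D n - K) ≤ D ((j + 1) * n) - K := by
    intro j
    induction j with
    | zero => simp
    | succ j ih =>
      have := hD ((j + 1) * n) n (Nat.mul_pos j.succ_pos hn) hn
      rw [show (j + 1 + 1) * n = (j + 1) * n + n by ring]
      push_cast
      linarith
  have hn' : (0 : ℝ) < n := by exact_mod_cast hn
  have multiples : Tendsto (fun j : ℕ => (j + 1) * n) atTop atTop :=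
    ((tendsto_add_atTop_nat 1).atTop_mul_const' hn)
  have const_div : Tendsto (fun j : ℕ => K / (((j + 1) * n : ℕ) : ℝ)) atTop (𝓝 0) :=
    (tendsto_natCast_atTop_atTop.comp multiples).const_div_atTop K
  have limit_le : (D n - K) / n ≤ 0 - 0 := by
    refine ge_of_tendsto' ((hε.comp multiples).sub const_div) fun j => ?_
    have := hDε ((j + 1) * n) (Nat.mul_pos j.succ_pos hn)
    simp only [Function.comp]
    rw [← sub_div, Nat.cast_mul, Nat.cast_succ, div_le_div_iff₀ hn' (by positivity)]
    nlinarith [iterate j]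
  rw [sub_zero, div_le_iff₀ hn', zero_mul] at limit_le
  linarith

theorem mul_log_div_add_mul_log_div_le {p a b q s t K : ℝ} (hp : 0 < p) (ha : 0 < a)
    (hb : 0 < b) (hq : 0 < q) (hs : 0 < s) (ht : 0 < t) (hK : 0 < K) (hqK : q ≤ K * (s * t)) :
    p * Real.log (a / s) + p * Real.log (b / t) - p * Real.log K + (p - a * b) ≤
      p * Real.log (p / q) := by
  have gibbs := mul_log_add_sub_le_mul_log_div hp.le (mul_pos ha hb).le
    (fun h => absurd h (mul_pos ha hb).ne') one_pos
  have log_q := Real.log_le_log hq hqK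
  rw [Real.log_mul hK.ne' (by positivity), Real.log_mul hs.ne' ht.ne'] at log_q
  rw [Real.log_div hp.ne' (by positivity), Real.log_mul ha.ne' hb.ne', Real.log_one] at gibbs
  rw [Real.log_div hp.ne' hq.ne', Real.log_div ha.ne' hs.ne', Real.log_div hb.ne' ht.ne']
  linarith [mul_le_mul_of_nonneg_left log_q hp.le]

variable {α : Type*} [MeasurableSpace α] [MeasurableSingletonClass α] {ν m : Measure (ℕ → α)}

theorem measureReal_wordCyl_append_mul_log_le [IsFiniteMeasure ν] (hν : MeasurePreserving shift ν ν)
    {n l : ℕ} {u : Fin n → α} {v : Fin l → α} {K : ℝ} (hK : 0 < K)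
    (hm : m.real (wordCyl (Fin.append u v)) ≤ K * (m.real (wordCyl u) * m.real (wordCyl v)))
    (hac : m.real (wordCyl (Fin.append u v)) = 0 → ν.real (wordCyl (Fin.append u v)) = 0) :
    ν.real (wordCyl (Fin.append u v)) * Real.log (ν.real (wordCyl u) / m.real (wordCyl u)) +
      ν.real (wordCyl (Fin.append u v)) * Real.log (ν.real (wordCyl v) / m.real (wordCyl v)) -
      ν.real (wordCyl (Fin.append u v)) * Real.log K +
      (ν.real (wordCyl (Fin.append u v)) - ν.real (wordCyl u) * ν.real (wordCyl v)) ≤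
    ν.real (wordCyl (Fin.append u v)) *
      Real.log (ν.real (wordCyl (Fin.append u v)) / m.real (wordCyl (Fin.append u v))) := by
  rcases measureReal_nonneg (μ := ν) (s := wordCyl (Fin.append u v)) |>.eq_or_lt with h | h
  · simpa [← h] using by positivity
  have u_pos : 0 < ν.real (wordCyl u) :=
    h.trans_le (measureReal_mono (wordCyl_append u v ▸ Set.inter_subset_left))
  have v_pos : 0 < ν.real (wordCyl v) := by
    rw [← (hν.iterate n).measureReal_preimage (measurableSet_wordCyl v).nullMeasurableSet]
    exact h.trans_le (measureReal_mono (wordCyl_append u v ▸ Set.inter_subset_right))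
  have m_pos : 0 < m.real (wordCyl (Fin.append u v)) :=
    measureReal_nonneg.lt_of_ne fun h0 => h.ne' (hac h0.symm)
  have m_mul_pos := pos_of_mul_pos_right (m_pos.trans_le hm) hK.le
  exact mul_log_div_add_mul_log_div_le h u_pos v_pos m_pos
    (pos_of_mul_pos_left m_mul_pos measureReal_nonneg)
    (pos_of_mul_pos_right m_mul_pos measureReal_nonneg) hK hm

variable [Fintype α]

/-- The Kullback–Leibler divergence of the distributions of the words of length `n` under `ν`
and `m`. -/
def wordDivergence (ν m : Measure (ℕ → α)) (n : ℕ) : ℝ :=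
  ∑ u : Fin n → α, ν.real (wordCyl u) * Real.log (ν.real (wordCyl u) / m.real (wordCyl u))

theorem sum_measureReal_wordCyl_append_right [IsFiniteMeasure ν] {n : ℕ} (l : ℕ)
    (u : Fin n → α) :
    ∑ v : Fin l → α, ν.real (wordCyl (Fin.append u v)) = ν.real (wordCyl u) := by
  have shifted := sum_measureReal_wordCyl_inter
    ((ν.restrict (wordCyl u)).map shift^[n]) l Set.univ
  have measurable_iterate : Measurable (shift^[n] : (ℕ → α) → _) := measurable_shift.iterate n
  simpa [wordCyl_append, map_measureReal_apply measurable_iterate, measurableSet_wordCyl,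
    measureReal_restrict_apply, measurable_iterate (measurableSet_wordCyl _), Set.inter_comm]
    using shifted

theorem sum_measureReal_wordCyl_append_left [IsFiniteMeasure ν]
    (hν : MeasurePreserving shift ν ν) (n : ℕ) {l : ℕ} (v : Fin l → α) :
    ∑ u : Fin n → α, ν.real (wordCyl (Fin.append u v)) = ν.real (wordCyl v) := by
  simp only [wordCyl_append, sum_measureReal_wordCyl_inter]
  exact (hν.iterate n).measureReal_preimage (measurableSet_wordCyl v).nullMeasurableSet

theorem wordDivergence_add_sub_log_le [IsProbabilityMeasure ν]
    (hν : MeasurePreserving shift ν ν) {n l : ℕ} {K : ℝ} (hK : 0 < K)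
    (hm : ∀ (u : Fin n → α) (v : Fin l → α),
      m.real (wordCyl (Fin.append u v)) ≤ K * (m.real (wordCyl u) * m.real (wordCyl v)))
    (hac : ∀ w : Fin (n + l) → α, m.real (wordCyl w) = 0 → ν.real (wordCyl w) = 0) :
    wordDivergence ν m n + wordDivergence ν m l - Real.log K ≤ wordDivergence ν m (n + l) := by
  have summed := Finset.sum_le_sum (s := Finset.univ) fun (u : Fin n → α) _ =>
    Finset.sum_le_sum (s := Finset.univ) fun (v : Fin l → α) _ =>
      measureReal_wordCyl_append_mul_log_le hν hK (hm u v) (hac (Fin.append u v))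
  have left_sum : ∑ u : Fin n → α, ∑ v : Fin l → α, ν.real (wordCyl (Fin.append u v)) *
      Real.log (ν.real (wordCyl v) / m.real (wordCyl v)) = wordDivergence ν m l := by
    rw [Finset.sum_comm]
    simp only [← Finset.sum_mul, sum_measureReal_wordCyl_append_left hν, wordDivergence]
  rw [wordDivergence, wordDivergence.eq_1 ν m (n + l), sum_words_append]
  simp only [Finset.sum_add_distrib, Finset.sum_sub_distrib, left_sum, ← Finset.sum_mul,
    ← Finset.mul_sum, sum_measureReal_wordCyl_append_right, sum_measureReal_wordCyl, one_mul,
    mul_one, sub_self, add_zero] at summed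
  exact summed

theorem wordDivergence_le [IsProbabilityMeasure ν] {n : ℕ} {ε : ℝ}
    (h : ∀ u : Fin n → α, ν.real (wordCyl u) ≤ Real.exp ε * m.real (wordCyl u)) :
    wordDivergence ν m n ≤ ε := by
  calc wordDivergence ν m n ≤ ∑ u : Fin n → α, ν.real (wordCyl u) * ε := by
        refine Finset.sum_le_sum fun u _ => ?_
        rcases measureReal_nonneg (μ := ν) (s := wordCyl u) |>.eq_or_lt with h0 | h0
        · simp [← h0]
        · have m_pos : 0 < m.real (wordCyl u) :=
            pos_of_mul_pos_right (h0.trans_le (h u)) (Real.exp_pos ε).le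
          gcongr
          rw [Real.log_le_iff_le_exp (div_pos h0 m_pos), div_le_iff₀ m_pos]
          exact h u
    _ = ε := by rw [← Finset.sum_mul, sum_measureReal_wordCyl, one_mul]

theorem measureReal_mul_log_le_wordDivergence_add [IsProbabilityMeasure ν]
    [IsProbabilityMeasure m] {n : ℕ}
    (hac : ∀ u : Fin n → α, m.real (wordCyl u) = 0 → ν.real (wordCyl u) = 0)
    (S : Finset (Fin n → α)) {t : ℝ} (ht : 1 ≤ t) :
    ν.real (initialWord n ⁻¹' S) * Real.log t ≤
      wordDivergence ν m n + t * m.real (initialWord n ⁻¹' S) := by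
  have real_preimage : ∀ (μ : Measure (ℕ → α)) [IsProbabilityMeasure μ],
      μ.real (initialWord n ⁻¹' S) = ∑ u, if u ∈ S then μ.real (wordCyl u) else 0 := by
    intro μ _
    simp [measureReal_def, measure_initialWord_preimage, ENNReal.toReal_sum]
  have pointwise : ∀ u : Fin n → α,
      (if u ∈ S then ν.real (wordCyl u) else 0) * Real.log t + ν.real (wordCyl u) -
        t * (if u ∈ S then m.real (wordCyl u) else 0) - m.real (wordCyl u) ≤
      ν.real (wordCyl u) * Real.log (ν.real (wordCyl u) / m.real (wordCyl u)) := by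
    intro u
    have gibbs (r : ℝ) := mul_log_add_sub_le_mul_log_div (t := r) (measureReal_nonneg (μ := ν))
      (measureReal_nonneg (μ := m)) (hac u)
    split_ifs
    · linarith [gibbs t (by linarith), measureReal_nonneg (μ := m) (s := wordCyl u)]
    · simpa using gibbs 1 one_pos
  have summed := Finset.sum_le_sum (s := Finset.univ) fun u _ => pointwise u
  simp only [Finset.sum_add_distrib, Finset.sum_sub_distrib, ← Finset.mul_sum, ← Finset.sum_mul,
    sum_measureReal_wordCyl, ← real_preimage, add_sub_right_comm] at summed
  simp only [wordDivergence]
  linarith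

end WordDivergence

-- The divergences of the word distributions are superadditive up to `log K` and sublinear,
-- hence bounded.
theorem absolutelyContinuous_of_wordCyl_le_exp_mul {α : Type*} [Finite α] [TopologicalSpace α]
    [DiscreteTopology α] [MeasurableSpace α] [BorelSpace α] {ν m : Measure (ℕ → α)}
    [IsProbabilityMeasure ν] [IsProbabilityMeasure m] (hν : MeasurePreserving shift ν ν)
    {K : ℝ} (hK : 0 < K)
    (hm : ∀ n l, 1 ≤ n → 1 ≤ l → ∀ (u : Fin n → α) (v : Fin l → α),
      m.real (wordCyl (Fin.append u v)) ≤ K * (m.real (wordCyl u) * m.real (wordCyl v)))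
    {ε : ℕ → ℝ} (hε : Tendsto (fun n : ℕ => ε n / n) atTop (𝓝 0))
    (hle : ∀ n, 1 ≤ n → ∀ u : Fin n → α,
      ν.real (wordCyl u) ≤ Real.exp (ε n) * m.real (wordCyl u)) : ν ≪ m := by
  have := Fintype.ofFinite α
  have hac : ∀ n, 1 ≤ n → ∀ u : Fin n → α,
      m.real (wordCyl u) = 0 → ν.real (wordCyl u) = 0 := fun n hn u h =>
    le_antisymm (by simpa [h] using hle n hn u) measureReal_nonneg
  have bounded : ∀ n, 1 ≤ n → wordDivergence ν m n ≤ Real.log K := fun n =>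
    le_of_superadditive_of_le_sublinear (n := n)
      (fun n l hn hl => wordDivergence_add_sub_log_le hν hK (hm n l hn hl)
        (hac (n + l) (by omega)))
      (fun n hn => wordDivergence_le (hle n hn)) hε
  refine absolutelyContinuous_of_mul_log_le (K := Real.log K) fun n hn S t ht => ?_
  exact (measureReal_mul_log_le_wordDivergence_add (hac n hn) S ht).trans
    (by gcongr; exact bounded n hn)

/-! ### Gibbs measures -/

section LogGibbsBounds

variable {α : Type*} [MeasurableSpace α]

theorem IsInvariantOn.measurePreserving {X : Set (ℕ → α)} {μ : Measure (ℕ → α)}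
    (hμ : IsInvariantOn μ X) : MeasurePreserving shift μ μ :=
  ⟨measurable_shift, Measure.ext fun B hB => by
    rw [Measure.map_apply measurable_shift hB, hμ.2.2 B hB]⟩

theorem IsInvariantOn.ae_mem {X : Set (ℕ → α)} {μ : Measure (ℕ → α)} (hμ : IsInvariantOn μ X)
    (hX : MeasurableSet X) : ∀ᵐ x ∂μ, x ∈ X :=
  have := hμ.1
  (mem_ae_iff_prob_eq_one hX).2 hμ.2.1

/-- The cylinder measures of `μ` along points of `X` are positive and agree with
`exp (φ n x - n * P)` up to the factor `exp (± c n)`. With `φ = birk g` and `c` constant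
(resp. sublinear) these are the bounds defining a Gibbs (resp. weak Gibbs) measure for `g`. -/
def LogGibbsBounds (μ : Measure (ℕ → α)) (X : Set (ℕ → α)) (φ : ℕ → (ℕ → α) → ℝ) (P : ℝ)
    (c : ℕ → ℝ) : Prop :=
  ∀ x ∈ X, ∀ n : ℕ, 1 ≤ n → 0 < μ.real (wordCyl (initialWord n x)) ∧
    |Real.log (μ.real (wordCyl (initialWord n x))) - (φ n x - n * P)| ≤ c n

theorem inv_le_div_and_div_le_iff_abs_log_sub_log_le {t w C : ℝ} (hw : 0 < w) (hC : 0 < C) :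
    C⁻¹ ≤ t / w ∧ t / w ≤ C ↔ 0 < t ∧ |Real.log t - Real.log w| ≤ Real.log C := by
  by_cases ht : 0 < t
  · have htw : 0 < t / w := div_pos ht hw
    rw [← Real.log_div ht.ne' hw.ne', abs_le, ← Real.log_inv,
      Real.log_le_log_iff (inv_pos.2 hC) htw, Real.log_le_log_iff htw hC]
    simp [ht]
  · have not_le : ¬ C⁻¹ ≤ t / w := fun h =>
      ht ((div_pos_iff_of_pos_right hw).1 ((inv_pos.2 hC).trans_le h))
    simp [ht, not_le]

variable {X : Set (ℕ → α)} {μ : Measure (ℕ → α)} {g : (ℕ → α) → ℝ}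

theorem measure_cyl (hX : ∀ᵐ x ∂μ, x ∈ X) (x : ℕ → α) (n : ℕ) :
    μ (cyl X x n) = μ (wordCyl (initialWord n x)) := by
  have : cyl X x n = wordCyl (initialWord n x) ∩ X := by
    ext z
    rw [Set.mem_inter_iff, mem_wordCyl_iff_initialWord_eq, initialWord_eq_initialWord_iff,
      and_comm]
    rfl
  rw [this]
  exact measure_inter_conull (mem_ae_iff.1 hX)

theorem inv_le_measure_cyl_div_and_le_iff (hX : ∀ᵐ x ∂μ, x ∈ X) (x : ℕ → α) (n : ℕ) (P : ℝ)
    {C : ℝ} (hC : 0 < C) :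
    C⁻¹ ≤ (μ (cyl X x n)).toReal / (Real.exp (-(n : ℝ) * P) * Real.exp (birk g n x)) ∧
      (μ (cyl X x n)).toReal / (Real.exp (-(n : ℝ) * P) * Real.exp (birk g n x)) ≤ C ↔
    0 < μ.real (wordCyl (initialWord n x)) ∧
      |Real.log (μ.real (wordCyl (initialWord n x))) - (birk g n x - n * P)| ≤ Real.log C := by
  rw [measure_cyl hX, ← measureReal_def,
    inv_le_div_and_div_le_iff_abs_log_sub_log_le (by positivity) hC, ← Real.exp_add,
    Real.log_exp, neg_mul, neg_add_eq_sub]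

theorem gibbsFun_iff (hX : ∀ᵐ x ∂μ, x ∈ X) :
    GibbsFun X g μ ↔ ∃ P c, LogGibbsBounds μ X (birk g) P fun _ => c := by
  constructor
  · rintro ⟨P, C, hC, h⟩
    exact ⟨P, Real.log C, fun x hx n hn =>
      (inv_le_measure_cyl_div_and_le_iff hX x n P hC).1 (h x hx n hn)⟩
  · rintro ⟨P, c, h⟩
    refine ⟨P, Real.exp c, Real.exp_pos c, fun x hx n hn =>
      (inv_le_measure_cyl_div_and_le_iff hX x n P (Real.exp_pos c)).2 ?_⟩
    rw [Real.log_exp]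
    exact h x hx n hn

theorem weakGibbsFun_iff (hX : ∀ᵐ x ∂μ, x ∈ X) :
    WeakGibbsFun X g μ ↔ ∃ (P : ℝ) (c : ℕ → ℝ), Tendsto (fun n : ℕ => c n / n) atTop (𝓝 0) ∧
      LogGibbsBounds μ X (birk g) P c := by
  constructor
  · rintro ⟨P, C, hC, hlim, h⟩
    exact ⟨P, fun n => Real.log (C n), hlim, fun x hx n hn =>
      (inv_le_measure_cyl_div_and_le_iff hX x n P (hC n hn)).1 (h x hx n hn)⟩
  · rintro ⟨P, c, hlim, h⟩
    refine ⟨P, fun n => Real.exp (c n), fun n _ => Real.exp_pos _, by simpa using hlim,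
      fun x hx n hn => (inv_le_measure_cyl_div_and_le_iff hX x n P (Real.exp_pos _)).2 ?_⟩
    rw [Real.log_exp]
    exact h x hx n hn

theorem GibbsFun.weakGibbsFun (h : GibbsFun X g μ) : WeakGibbsFun X g μ := by
  obtain ⟨P, C, hC, h⟩ := h
  exact ⟨P, fun _ => C, fun _ _ => hC, tendsto_const_div_atTop_nhds_zero_nat _, h⟩

end LogGibbsBounds

section CylinderMixing

variable {α : Type*} [MeasurableSpace α] {f : (ℕ → α) → ℝ} {B P c : ℝ} {μ : Measure (ℕ → α)}

theorem LogGibbsBounds.mul_le_measureReal {X : Set (ℕ → α)} (hX : ∀ x ∈ X, ∀ n, shift^[n] x ∈ X)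
    (hB : ∀ x, |f x| ≤ B) (hμ : LogGibbsBounds μ X (birk f) P fun _ => c) {z : ℕ → α} (hz : z ∈ X)
    {n l : ℕ} (hn : 1 ≤ n) (hl : 1 ≤ l) (L : ℕ) :
    Real.exp (-(3 * c + L * (|P| + B))) * μ.real (wordCyl (initialWord n z)) *
      μ.real (wordCyl (initialWord l (shift^[n + L] z))) ≤
    μ.real (wordCyl (initialWord (n + L + l) z)) := by
  obtain ⟨head_pos, head⟩ := hμ z hz n hn
  obtain ⟨tail_pos, tail⟩ := hμ _ (hX z hz (n + L)) l hl
  obtain ⟨total_pos, total⟩ := hμ z hz (n + L + l) (by omega)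
  rw [← Real.log_le_log_iff (by positivity) total_pos, Real.log_mul (by positivity) tail_pos.ne',
    Real.log_mul (by positivity) head_pos.ne', Real.log_exp]
  rw [birk_add, birk_add] at total
  have middle := abs_le.1 (abs_birk_le hB L (shift^[n] z))
  have pressure : L * P ≤ L * |P| := by gcongr; exact le_abs_self P
  push_cast at total
  rw [abs_le] at head tail total
  linarith

theorem exists_cylinder_mixing_of_logGibbsBounds [Finite α] {R : α → α → Prop}
    (hX : IrreducibleShift (sft R)) (hB : ∀ x, |f x| ≤ B) [IsFiniteMeasure μ]
    (hμX : ∀ᵐ x ∂μ, x ∈ sft R) (hμ : LogGibbsBounds μ (sft R) (birk f) P fun _ => c) :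
    ∃ p : ℕ, ∃ a : ENNReal, a ≠ 0 ∧ ∀ n l, 1 ≤ n → 1 ≤ l →
      ∀ (u : Fin n → α) (v : Fin l → α), a * μ (wordCyl u) * μ (wordCyl v) ≤
        ∑ L ∈ Finset.range (p + 1), μ (shift^[n + L] ⁻¹' wordCyl v ∩ wordCyl u) := by
  obtain ⟨p, connect⟩ := exists_bounded_connection hX
  refine ⟨p, ENNReal.ofReal (Real.exp (-(3 * c + p * (|P| + B)))),
    by simpa using Real.exp_pos _, fun n l hn hl u v => ?_⟩
  by_cases hne : μ (wordCyl u) = 0 ∨ μ (wordCyl v) = 0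
  · rcases hne with h | h <;> simp [h]
  push Not at hne
  obtain ⟨x, hx, rfl⟩ := exists_initialWord_eq_of_measure_ne_zero hμX hne.1
  obtain ⟨x', hx', rfl⟩ := exists_initialWord_eq_of_measure_ne_zero hμX hne.2
  obtain ⟨L, hL, z, hz, hzx, rfl⟩ := connect x hx x' hx' n hn
  rw [← initialWord_eq_initialWord_iff.2 hzx]
  have cyl_subset : wordCyl (initialWord (n + L + l) z) ⊆
      shift^[n + L] ⁻¹' wordCyl (initialWord l (shift^[n + L] z)) ∩
        wordCyl (initialWord n z) := fun y hy =>
    ⟨(wordCyl_append _ _ ▸ initialWord_add (n + L) l z ▸ hy).2,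
      wordCyl_initialWord_subset (by omega) z hy⟩
  refine le_trans (le_trans ?_ (measure_mono cyl_subset)) (Finset.single_le_sum
    (f := fun L' => μ (shift^[n + L'] ⁻¹' wordCyl (initialWord l (shift^[n + L] z)) ∩
      wordCyl (initialWord n z))) (fun _ _ => zero_le) (Finset.mem_range_succ_iff.2 hL))
  rw [← ENNReal.toReal_le_toReal (by finiteness) (by finiteness), ENNReal.toReal_mul,
    ENNReal.toReal_mul, ENNReal.toReal_ofReal (Real.exp_pos _).le]
  refine le_trans ?_ (hμ.mul_le_measureReal (fun _ => shift_iterate_mem_sft) hB hz hn hl L)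
  have : 0 ≤ B := (abs_nonneg _).trans (hB z)
  simp only [measureReal_def]
  gcongr

end CylinderMixing

section Ergodicity

variable {α : Type*} [Finite α] [TopologicalSpace α] [DiscreteTopology α] [MeasurableSpace α]
  [BorelSpace α]

-- For invariant `B`, summing over the second cylinder and then over the first one turns the
-- mixing bound into `c * μ B * μ Bᶜ ≤ (p + 1) * μ (B ∩ Bᶜ) = 0`.
theorem ergodic_of_cylinder_mixing {μ : Measure (ℕ → α)} [IsFiniteMeasure μ]
    (hμ : MeasurePreserving shift μ μ) {c : ENNReal} (hc : c ≠ 0) {p : ℕ}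
    (hmix : ∀ n l, 1 ≤ n → 1 ≤ l → ∀ (u : Fin n → α) (v : Fin l → α),
      c * μ (wordCyl u) * μ (wordCyl v) ≤
        ∑ L ∈ Finset.range (p + 1), μ (shift^[n + L] ⁻¹' wordCyl v ∩ wordCyl u)) :
    Ergodic shift μ := by
  refine ⟨hμ, ⟨fun B hB hinv => ?_⟩⟩
  have iterate_inv : ∀ j, shift^[j] ⁻¹' B = B := fun j => by
    rw [Set.preimage_iterate_eq, Function.iterate_fixed hinv]
  have map_restrict_apply : ∀ j n (u : Fin n → α) {S : Set (ℕ → α)}, MeasurableSet S →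
      (μ.restrict (wordCyl u)).map shift^[j] S = μ (shift^[j] ⁻¹' S ∩ wordCyl u) := by
    intro j n u S hS
    rw [Measure.map_apply (measurable_shift.iterate j) hS,
      Measure.restrict_apply (measurable_shift.iterate j hS)]
  have mixing_with_B : ∀ n, 1 ≤ n → ∀ u : Fin n → α,
      c * μ (wordCyl u) * μ B ≤ (p + 1 : ℕ) * μ (B ∩ wordCyl u) := by
    intro n hn u
    have le_map : (c * μ (wordCyl u)) • μ ≤
        ∑ L ∈ Finset.range (p + 1), (μ.restrict (wordCyl u)).map shift^[n + L] := by
      refine measure_le_of_wordCyl_le fun l hl v => ?_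
      simpa only [Measure.smul_apply, smul_eq_mul, Measure.finsetSum_apply,
        map_restrict_apply _ _ _ (measurableSet_wordCyl v)] using hmix n l hn hl u v
    simpa [map_restrict_apply _ _ _ hB, iterate_inv] using le_map B
  have smul_le_restrict : (c * μ B) • μ ≤ ((p + 1 : ℕ) : ENNReal) • μ.restrict B := by
    have := Measure.smul_finite (μ.restrict B) (c := ((p + 1 : ℕ) : ENNReal)) (by finiteness)
    refine measure_le_of_wordCyl_le fun n hn u => ?_
    rw [Measure.smul_apply, Measure.smul_apply, smul_eq_mul, smul_eq_mul,
      Measure.restrict_apply (measurableSet_wordCyl u), Set.inter_comm, mul_right_comm]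
    exact mixing_with_B n hn u
  have product_eq_zero : c * μ B * μ Bᶜ = 0 := by
    simpa [Measure.restrict_apply hB.compl] using smul_le_restrict Bᶜ
  rw [eventuallyConst_set', ae_eq_empty, ae_eq_univ]
  simpa [hc] using product_eq_zero

theorem ergodic_of_gibbsFun {R : α → α → Prop} (hX : IrreducibleShift (sft R))
    {f : (ℕ → α) → ℝ} {B : ℝ} (hB : ∀ x, |f x| ≤ B) {μ : Measure (ℕ → α)}
    (hμ : IsInvariantOn μ (sft R)) (hμf : GibbsFun (sft R) f μ) : Ergodic shift μ := by
  have := hμ.1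
  have ae_mem := hμ.ae_mem (measurableSet_sft R)
  obtain ⟨P, c, hμf⟩ := (gibbsFun_iff ae_mem).1 hμf
  obtain ⟨p, a, ha, hmix⟩ := exists_cylinder_mixing_of_logGibbsBounds hX hB ae_mem hμf
  exact ergodic_of_cylinder_mixing hμ.measurePreserving ha hmix

end Ergodicity

section Uniqueness

variable {α : Type*} [MeasurableSpace α] {Y : Set (ℕ → α)} {ν m : Measure (ℕ → α)}
  {φ : ℕ → (ℕ → α) → ℝ} {P Q : ℝ} {c d : ℕ → ℝ}

theorem measureReal_wordCyl_le_of_logGibbsBounds (hνY : ∀ᵐ y ∂ν, y ∈ Y)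
    (hν : LogGibbsBounds ν Y φ Q d) (hm : LogGibbsBounds m Y φ P c) {n : ℕ} (hn : 1 ≤ n)
    (u : Fin n → α) :
    ν.real (wordCyl u) ≤ Real.exp (c n + d n + n * (P - Q)) * m.real (wordCyl u) := by
  by_cases hu : ν (wordCyl u) = 0
  · rw [measureReal_def, hu, ENNReal.toReal_zero]
    positivity
  obtain ⟨y, hy, rfl⟩ := exists_initialWord_eq_of_measure_ne_zero hνY hu
  obtain ⟨ν_pos, hν⟩ := hν y hy n hn
  obtain ⟨m_pos, hm⟩ := hm y hy n hn
  rw [← Real.log_le_log_iff ν_pos (by positivity), Real.log_mul (Real.exp_ne_zero _) m_pos.ne',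
    Real.log_exp]
  rw [abs_le] at hν hm
  linarith

variable [MeasurableSingletonClass α]

theorem LogGibbsBounds.le_of_sublinear [Finite α] [IsProbabilityMeasure ν]
    [IsProbabilityMeasure m] (hνY : ∀ᵐ y ∂ν, y ∈ Y) (hν : LogGibbsBounds ν Y φ Q d)
    (hm : LogGibbsBounds m Y φ P c) (hc : Tendsto (fun n : ℕ => c n / n) atTop (𝓝 0))
    (hd : Tendsto (fun n : ℕ => d n / n) atTop (𝓝 0)) : Q ≤ P := by
  have := Fintype.ofFinite α
  have exponent_nonneg : ∀ n : ℕ, 1 ≤ n → 0 ≤ c n + d n + n * (P - Q) := by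
    intro n hn
    have summed := Finset.sum_le_sum (s := Finset.univ) fun (u : Fin n → α) _ =>
      measureReal_wordCyl_le_of_logGibbsBounds hνY hν hm hn u
    rw [← Finset.mul_sum, sum_measureReal_wordCyl, sum_measureReal_wordCyl, mul_one] at summed
    exact Real.one_le_exp_iff.1 summed
  have limit := (hc.add hd).add_const (P - Q)
  have limit_nonneg : 0 ≤ 0 + 0 + (P - Q) := by
    refine ge_of_tendsto limit ?_
    filter_upwards [eventually_ge_atTop 1] with n hn
    have : (0 : ℝ) < n := by exact_mod_cast hn
    rw [← add_div, div_add' _ _ _ this.ne', mul_comm (P - Q)]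
    exact div_nonneg (exponent_nonneg n hn) this.le
  linarith

end Uniqueness

theorem eq_of_weakGibbsFun {α : Type*} [Finite α] [TopologicalSpace α] [DiscreteTopology α]
    [MeasurableSpace α] [BorelSpace α] {Y : Set (ℕ → α)} (hY : MeasurableSet Y)
    {g : (ℕ → α) → ℝ} {ν m : Measure (ℕ → α)} (hν : IsInvariantOn ν Y) (hm : IsInvariantOn m Y)
    (herg : Ergodic shift m) {K : ℝ} (hK : 0 < K)
    (hmK : ∀ n l, 1 ≤ n → 1 ≤ l → ∀ (u : Fin n → α) (v : Fin l → α),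
      m.real (wordCyl (Fin.append u v)) ≤ K * (m.real (wordCyl u) * m.real (wordCyl v)))
    (hmg : WeakGibbsFun Y g m) (hνg : WeakGibbsFun Y g ν) : ν = m := by
  have := hν.1
  have := hm.1
  obtain ⟨P, c, hc, hmP⟩ := (weakGibbsFun_iff (hm.ae_mem hY)).1 hmg
  obtain ⟨Q, d, hd, hνQ⟩ := (weakGibbsFun_iff (hν.ae_mem hY)).1 hνg
  obtain rfl : P = Q := le_antisymm (hmP.le_of_sublinear (hm.ae_mem hY) hνQ hd hc)
    (hνQ.le_of_sublinear (hν.ae_mem hY) hmP hc hd)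
  refine herg.eq_of_absolutelyContinuous hν.measurePreserving ?_
  refine absolutelyContinuous_of_wordCyl_le_exp_mul hν.measurePreserving hK hmK
    (ε := fun n => c n + d n) (by simpa [add_div] using hc.add hd) fun n hn u => ?_
  simpa using measureReal_wordCyl_le_of_logGibbsBounds (hν.ae_mem hY) hνQ hmP hn u

/-! ### Word weights and the sequence `gseq` -/

section WordWeight

variable {α : Type*} {X : Set (ℕ → α)} {f : (ℕ → α) → ℝ} {B : ℝ} {n : ℕ}

/-- The supremum of `exp (birk f n)` over the points of `X` starting with the `n`-word `u`. It is
the summand of `gseq`; for a word that does not occur in `X` the supremum is over the empty set and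
takes the value `0`. -/
def wordWeight (X : Set (ℕ → α)) (f : (ℕ → α) → ℝ) (u : Fin n → α) : ℝ :=
  ⨆ x : ↥(X ∩ wordCyl u), Real.exp (birk f n x)

theorem wordWeight_nonneg (u : Fin n → α) : 0 ≤ wordWeight X f u :=
  Real.iSup_nonneg fun _ => (Real.exp_pos _).le

theorem wordWeight_le {u : Fin n → α} {a : ℝ} (ha : 0 ≤ a)
    (h : ∀ x ∈ X, x ∈ wordCyl u → Real.exp (birk f n x) ≤ a) : wordWeight X f u ≤ a :=
  Real.iSup_le (fun x => h x x.2.1 x.2.2) ha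

theorem wordWeight_eq_zero {u : Fin n → α} (h : ∀ x ∈ X, x ∉ wordCyl u) : wordWeight X f u = 0 :=
  (wordWeight_le le_rfl fun x hx hxu => absurd hxu (h x hx)).antisymm (wordWeight_nonneg u)

theorem exp_birk_le_wordWeight (hB : ∀ x, |f x| ≤ B) {u : Fin n → α} {x : ℕ → α} (hx : x ∈ X)
    (hxu : x ∈ wordCyl u) : Real.exp (birk f n x) ≤ wordWeight X f u := by
  refine le_ciSup (f := fun z : ↥(X ∩ wordCyl u) => Real.exp (birk f n z)) ?_ ⟨x, hx, hxu⟩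
  refine ⟨Real.exp (n * B), ?_⟩
  rintro _ ⟨z, rfl⟩
  exact Real.exp_le_exp.2 (abs_le.1 (abs_birk_le hB n z)).2

theorem wordWeight_append_le (hX : ∀ x ∈ X, ∀ n, shift^[n] x ∈ X) (hB : ∀ x, |f x| ≤ B) {l : ℕ}
    (u : Fin n → α) (v : Fin l → α) :
    wordWeight X f (Fin.append u v) ≤ wordWeight X f u * wordWeight X f v := by
  refine wordWeight_le (mul_nonneg (wordWeight_nonneg u) (wordWeight_nonneg v)) fun x hx hxuv => ?_
  rw [wordCyl_append] at hxuv
  rw [birk_add, Real.exp_add]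
  exact mul_le_mul (exp_birk_le_wordWeight hB hx hxuv.1)
    (exp_birk_le_wordWeight hB (hX x hx n) hxuv.2) (Real.exp_pos _).le (wordWeight_nonneg u)

theorem LogGibbsBounds.wordWeight_bounds [MeasurableSpace α] {μ : Measure (ℕ → α)} {P : ℝ}
    {c : ℕ → ℝ} (hμ : LogGibbsBounds μ X (birk f) P c) (hX : ∀ᵐ x ∂μ, x ∈ X)
    (hB : ∀ x, |f x| ≤ B) (hn : 1 ≤ n) (u : Fin n → α) :
    Real.exp (-c n - n * P) * wordWeight X f u ≤ μ.real (wordCyl u) ∧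
      μ.real (wordCyl u) ≤ Real.exp (c n - n * P) * wordWeight X f u := by
  constructor
  · rw [mul_comm, ← le_div_iff₀ (Real.exp_pos _)]
    refine wordWeight_le (by positivity) fun x hx hxu => ?_
    rw [← mem_wordCyl_iff_initialWord_eq.1 hxu]
    obtain ⟨pos, bound⟩ := hμ x hx n hn
    rw [le_div_iff₀ (Real.exp_pos _), ← Real.exp_add, ← Real.le_log_iff_exp_le pos]
    linarith [(abs_le.1 bound).1]
  · by_cases hu : μ (wordCyl u) = 0
    · rw [measureReal_def, hu, ENNReal.toReal_zero]
      exact mul_nonneg (Real.exp_pos _).le (wordWeight_nonneg u)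
    obtain ⟨x, hx, rfl⟩ := exists_initialWord_eq_of_measure_ne_zero hX hu
    obtain ⟨pos, bound⟩ := hμ x hx n hn
    calc μ.real (wordCyl (initialWord n x))
        ≤ Real.exp (c n - n * P) * Real.exp (birk f n x) := by
          rw [← Real.exp_add, ← Real.log_le_iff_le_exp pos]
          linarith [(abs_le.1 bound).2]
      _ ≤ Real.exp (c n - n * P) * wordWeight X f (initialWord n x) := by
          gcongr
          exact exp_birk_le_wordWeight hB hx fun _ => rfl

end WordWeight

section Gseq

variable {kX kY : ℕ} {X : Set (ℕ → Fin kX)} {πs : Fin kX → Fin kY} {f : (ℕ → Fin kX) → ℝ} {B : ℝ}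

theorem gseq_eq_sum_wordWeight (X : Set (ℕ → Fin kX)) (πs : Fin kX → Fin kY)
    (f : (ℕ → Fin kX) → ℝ) (n : ℕ) (y : ℕ → Fin kY) :
    gseq X πs f n y =
      ∑ u : Fin n → Fin kX, if πs ∘ u = initialWord n y then wordWeight X f u else 0 := by
  refine Finset.sum_congr rfl fun u _ => ?_
  by_cases hu : πs ∘ u = initialWord n y
  · have hu' : ∀ i : Fin n, πs (u i) = y i := congrFun hu
    rw [if_pos hu]
    by_cases hX : ∃ x ∈ X, ∀ i : Fin n, x i = u i
    · exact if_pos ⟨hX, hu'⟩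
    · rw [if_neg fun h => hX h.1, wordWeight_eq_zero fun x hx hxu => hX ⟨x, hx, hxu⟩]
  · rw [if_neg hu, if_neg fun h => hu (funext h.2)]

theorem gseq_congr {n : ℕ} {y y' : ℕ → Fin kY} (h : initialWord n y = initialWord n y') :
    gseq X πs f n y = gseq X πs f n y' := by
  simp only [gseq_eq_sum_wordWeight, h]

theorem gseq_pos (hB : ∀ x, |f x| ≤ B) (n : ℕ) {x : ℕ → Fin kX} (hx : x ∈ X) :
    0 < gseq X πs f n (πs ∘ x) := by
  rw [gseq_eq_sum_wordWeight]
  refine Finset.sum_pos' (fun u _ => ?_) ⟨initialWord n x, Finset.mem_univ _, ?_⟩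
  · split_ifs
    exacts [wordWeight_nonneg u, le_rfl]
  · rw [if_pos (by rfl)]
    exact (Real.exp_pos _).trans_le (exp_birk_le_wordWeight hB hx fun _ => rfl)

theorem gseq_add_le (hX : ∀ x ∈ X, ∀ n, shift^[n] x ∈ X) (hB : ∀ x, |f x| ≤ B) (n m : ℕ)
    (y : ℕ → Fin kY) :
    gseq X πs f (n + m) y ≤ gseq X πs f n y * gseq X πs f m (shift^[n] y) := by
  simp only [gseq_eq_sum_wordWeight]
  rw [sum_words_append, Finset.sum_mul_sum]
  refine Finset.sum_le_sum fun u _ => Finset.sum_le_sum fun v _ => ?_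
  have append_iff : πs ∘ Fin.append u v = initialWord (n + m) y ↔
      πs ∘ u = initialWord n y ∧ πs ∘ v = initialWord m (shift^[n] y) := by
    rw [initialWord_add, ← append_eq_append_iff]
    simp [funext_iff, Fin.forall_fin_add]
  by_cases h : πs ∘ Fin.append u v = initialWord (n + m) y
  · rw [if_pos h, if_pos (append_iff.1 h).1, if_pos (append_iff.1 h).2]
    exact wordWeight_append_le hX hB u v
  · rw [if_neg h]
    refine mul_nonneg ?_ ?_ <;> split_ifs
    exacts [wordWeight_nonneg u, le_rfl, wordWeight_nonneg v, le_rfl]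

theorem measurable_comp_left (πs : Fin kX → Fin kY) :
    Measurable fun x : ℕ → Fin kX => πs ∘ x :=
  measurable_pi_lambda _ fun i => (measurable_of_finite πs).comp (measurable_pi_apply i)

theorem measureReal_map_wordCyl (μ : Measure (ℕ → Fin kX)) [IsFiniteMeasure μ] {n : ℕ}
    (v : Fin n → Fin kY) :
    (μ.map fun x => πs ∘ x).real (wordCyl v) =
      ∑ u : Fin n → Fin kX, if πs ∘ u = v then μ.real (wordCyl u) else 0 := by
  rw [map_measureReal_apply (measurable_comp_left πs) (measurableSet_wordCyl v),
    ← sum_measureReal_wordCyl_inter μ n]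
  refine Finset.sum_congr rfl fun u _ => ?_
  have comp_mem_iff : ∀ x ∈ wordCyl u, πs ∘ x ∈ wordCyl v ↔ πs ∘ u = v := fun x hx => by
    rw [funext_iff]
    exact forall_congr' fun i => by simp [hx i]
  split_ifs with h
  · rw [Set.inter_eq_self_of_subset_left]
    exact fun x hx => (comp_mem_iff x hx).2 h
  · have : wordCyl u ∩ (fun x => πs ∘ x) ⁻¹' wordCyl v = ∅ :=
      Set.eq_empty_of_forall_notMem fun x hx => h ((comp_mem_iff x hx.1).1 hx.2)
    rw [this, measureReal_empty]

theorem LogGibbsBounds.map {μ : Measure (ℕ → Fin kX)} [IsFiniteMeasure μ] {P : ℝ} {c : ℕ → ℝ}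
    (hμ : LogGibbsBounds μ X (birk f) P c) (hX : ∀ᵐ x ∂μ, x ∈ X) (hB : ∀ x, |f x| ≤ B) :
    LogGibbsBounds (μ.map fun x => πs ∘ x) ((fun x => πs ∘ x) '' X)
      (fun n y => Real.log (gseq X πs f n y)) P c := by
  rintro _ ⟨x, hx, rfl⟩ n hn
  have weight_pos : 0 < gseq X πs f n (πs ∘ x) := gseq_pos hB n hx
  have lower : Real.exp (-c n - n * P) * gseq X πs f n (πs ∘ x) ≤
      (μ.map fun x => πs ∘ x).real (wordCyl (initialWord n (πs ∘ x))) := by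
    rw [measureReal_map_wordCyl, gseq_eq_sum_wordWeight, Finset.mul_sum]
    refine Finset.sum_le_sum fun u _ => ?_
    split_ifs
    exacts [(hμ.wordWeight_bounds hX hB hn u).1, (mul_zero _).le]
  have upper : (μ.map fun x => πs ∘ x).real (wordCyl (initialWord n (πs ∘ x))) ≤
      Real.exp (c n - n * P) * gseq X πs f n (πs ∘ x) := by
    rw [measureReal_map_wordCyl, gseq_eq_sum_wordWeight, Finset.mul_sum]
    refine Finset.sum_le_sum fun u _ => ?_
    split_ifs
    exacts [(hμ.wordWeight_bounds hX hB hn u).2, (mul_zero _).ge]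
  have measure_pos := (mul_pos (Real.exp_pos _) weight_pos).trans_le lower
  rw [← Real.log_le_log_iff (by positivity) measure_pos,
    Real.log_mul (Real.exp_ne_zero _) weight_pos.ne', Real.log_exp] at lower
  rw [← Real.log_le_log_iff measure_pos (by positivity),
    Real.log_mul (Real.exp_ne_zero _) weight_pos.ne', Real.log_exp] at upper
  exact ⟨measure_pos, abs_le.2 ⟨by linarith, by linarith⟩⟩

end Gseq

theorem LogGibbsBounds.measureReal_append_le {α : Type*} [MeasurableSpace α] {Y : Set (ℕ → α)}
    (hY : ∀ y ∈ Y, ∀ n, shift^[n] y ∈ Y) {ν : Measure (ℕ → α)} (hνY : ∀ᵐ y ∂ν, y ∈ Y)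
    {φ : ℕ → (ℕ → α) → ℝ} {P c : ℝ} (hν : LogGibbsBounds ν Y φ P fun _ => c)
    (hφ : ∀ y ∈ Y, ∀ n m, φ (n + m) y ≤ φ n y + φ m (shift^[n] y)) {n l : ℕ} (hn : 1 ≤ n)
    (hl : 1 ≤ l) (u : Fin n → α) (v : Fin l → α) :
    ν.real (wordCyl (Fin.append u v)) ≤
      Real.exp (3 * c) * (ν.real (wordCyl u) * ν.real (wordCyl v)) := by
  by_cases huv : ν (wordCyl (Fin.append u v)) = 0
  · rw [measureReal_def, huv, ENNReal.toReal_zero]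
    positivity
  obtain ⟨y, hy, hyuv⟩ := exists_initialWord_eq_of_measure_ne_zero hνY huv
  obtain ⟨rfl, rfl⟩ : initialWord n y = u ∧ initialWord l (shift^[n] y) = v := by
    rwa [initialWord_add, append_eq_append_iff] at hyuv
  rw [← initialWord_add]
  obtain ⟨total_pos, total⟩ := hν y hy (n + l) (by omega)
  obtain ⟨head_pos, head⟩ := hν y hy n hn
  obtain ⟨tail_pos, tail⟩ := hν _ (hY y hy n) l hl
  rw [← Real.log_le_log_iff total_pos (by positivity), Real.log_mul (by positivity) (by positivity),
    Real.log_mul head_pos.ne' tail_pos.ne', Real.log_exp]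
  rw [abs_le] at total head tail
  push_cast at total
  linarith [hφ y hy n l]

section StartWeight

variable {k kY : ℕ} {R : Fin k → Fin k → Prop} {F : Fin k → Fin k → ℝ} {f : (ℕ → Fin k) → ℝ}

/-- The weight `exp (F i j)` of an allowed transition, and `0` for a forbidden one. -/
def transitionWeight {α : Type*} (R : α → α → Prop) (F : α → α → ℝ) (i j : α) : ℝ :=
  if R i j then Real.exp (F i j) else 0

theorem transitionWeight_nonneg {α : Type*} (R : α → α → Prop) (F : α → α → ℝ) (i j : α) :
    0 ≤ transitionWeight R F i j := by
  rw [transitionWeight]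
  positivity

theorem transitionWeight_pos_iff {α : Type*} {R : α → α → Prop} {F : α → α → ℝ} {i j : α} :
    0 < transitionWeight R F i j ↔ R i j := by
  rw [transitionWeight]
  split_ifs with h <;> simp [h, Real.exp_pos]

theorem mem_wordCyl_cons {α : Type*} {n : ℕ} {i : α} {w : Fin n → α} {x : ℕ → α} :
    x ∈ wordCyl (Fin.cons i w : Fin (n + 1) → α) ↔ x 0 = i ∧ shift x ∈ wordCyl w := by
  simp [mem_wordCyl, Fin.forall_fin_succ, shift]

theorem wordWeight_cons {α : Type*} {R : α → α → Prop} {F : α → α → ℝ} {f : (ℕ → α) → ℝ}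
    (hf : ∀ x, f x = F (x 0) (x 1)) {n : ℕ} (i : α) (w : Fin (n + 1) → α) :
    wordWeight (sft R) f (Fin.cons i w : Fin (n + 2) → α) =
      transitionWeight R F i (w 0) * wordWeight (sft R) f w := by
  have apply_one : ∀ {x : ℕ → α}, shift x ∈ wordCyl w → x 1 = w 0 := fun hx => hx 0
  have birk_cons : ∀ {x : ℕ → α}, x ∈ wordCyl (Fin.cons i w : Fin (n + 2) → α) →
      birk f (n + 2) x = F i (w 0) + birk f (n + 1) (shift x) := fun hx => by
    obtain ⟨head, tail⟩ := mem_wordCyl_cons.1 hx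
    rw [birk_succ, hf, head, apply_one tail]
  by_cases hR : R i (w 0)
  · rw [transitionWeight, if_pos hR, wordWeight, wordWeight,
      Real.mul_iSup_of_nonneg (Real.exp_pos _).le]
    refine Function.Surjective.iSup_congr (fun x =>
      ⟨shift x.1, shift_mem_sft x.2.1, (mem_wordCyl_cons.1 x.2.2).2⟩) ?_ ?_
    · rintro ⟨x, hx, hxw⟩
      have cons_mem : splice 1 (fun _ => i) x ∈ sft R :=
        splice_mem_sft (by omega) (fun _ _ => (hxw 0).symm ▸ hR) hx
      have cons_mem_cyl : splice 1 (fun _ => i) x ∈ wordCyl (Fin.cons i w : Fin (n + 2) → α) :=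
        mem_wordCyl_cons.2 ⟨splice_of_lt zero_lt_one _ _,
          (shift_iterate_splice 1 (fun _ => i) x).symm ▸ hxw⟩
      exact ⟨⟨_, cons_mem, cons_mem_cyl⟩, Subtype.ext (shift_iterate_splice 1 (fun _ => i) x)⟩
    · rintro ⟨x, hx, hxw⟩
      rw [← Real.exp_add]
      exact congrArg Real.exp (birk_cons hxw).symm
  · rw [transitionWeight, if_neg hR, zero_mul]
    refine wordWeight_eq_zero fun x hx hxw => hR ?_
    obtain ⟨head, tail⟩ := mem_wordCyl_cons.1 hxw
    exact head ▸ apply_one tail ▸ hx 0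

/-- The part of `gseq X πs f (n + 1) y` carried by the words that start with `i`. -/
def startWeight (X : Set (ℕ → Fin k)) (πs : Fin k → Fin kY) (f : (ℕ → Fin k) → ℝ) (n : ℕ)
    (y : ℕ → Fin kY) (i : Fin k) : ℝ :=
  ∑ u : Fin n → Fin k, if πs ∘ Fin.cons i u = initialWord (n + 1) y then
    wordWeight X f (Fin.cons i u : Fin (n + 1) → Fin k) else 0

theorem gseq_succ (X : Set (ℕ → Fin k)) (πs : Fin k → Fin kY) (f : (ℕ → Fin k) → ℝ) (n : ℕ)
    (y : ℕ → Fin kY) : gseq X πs f (n + 1) y = ∑ i, startWeight X πs f n y i := by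
  rw [gseq_eq_sum_wordWeight, sum_words_cons]
  rfl

theorem startWeight_succ (hf : ∀ x, f x = F (x 0) (x 1)) (πs : Fin k → Fin kY) (n : ℕ)
    (y : ℕ → Fin kY) (i : Fin k) :
    startWeight (sft R) πs f (n + 1) y i = if πs i = y 0 then
      ∑ j, transitionWeight R F i j * startWeight (sft R) πs f n (shift y) j else 0 := by
  have comp_cons_iff : ∀ w : Fin (n + 1) → Fin k,
      πs ∘ Fin.cons i w = initialWord (n + 2) y ↔
        πs i = y 0 ∧ πs ∘ w = initialWord (n + 1) (shift y) := fun w => by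
    simp only [funext_iff, Fin.forall_fin_succ (n := n + 1)]
    rfl
  simp only [startWeight, comp_cons_iff, wordWeight_cons hf]
  split_ifs with hi
  · rw [sum_words_cons]
    simp only [hi, true_and, Fin.cons_zero, Finset.mul_sum, mul_ite, mul_zero]
  · simp [hi]

end StartWeight

/-! ### Nonnegative planar linear recursions -/

section PlanarRecursion

variable {α β γ δ : ℝ} {s t : ℕ → ℝ}

theorem cross_succ (hs : ∀ k, s (k + 1) = α * s k + β * t k)
    (ht : ∀ k, t (k + 1) = γ * s k + δ * t k) (k : ℕ) :
    s (k + 2) * t (k + 1) - s (k + 1) * t (k + 2) =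
      (α * δ - β * γ) * (s (k + 1) * t k - s k * t (k + 1)) := by
  rw [hs (k + 1), ht (k + 1), hs k, ht k]
  ring

theorem share_succ_sub_share (hpos : ∀ k, 0 < s k + t k) (k : ℕ) :
    s (k + 1) / (s (k + 1) + t (k + 1)) - s k / (s k + t k) =
      (s (k + 1) * t k - s k * t (k + 1)) / ((s k + t k) * (s (k + 1) + t (k + 1))) := by
  have := (hpos k).ne'
  have := (hpos (k + 1)).ne'
  field_simp
  ring

-- The Cayley–Hamilton theorem for `!![α, β; γ, δ]`.
theorem total_add_two (hs : ∀ k, s (k + 1) = α * s k + β * t k)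
    (ht : ∀ k, t (k + 1) = γ * s k + δ * t k) (k : ℕ) :
    s (k + 2) + t (k + 2) =
      (α + δ) * (s (k + 1) + t (k + 1)) - (α * δ - β * γ) * (s k + t k) := by
  rw [hs (k + 1), ht (k + 1), hs k, ht k]
  ring

theorem share_mem_Icc (hs0 : ∀ k, 0 ≤ s k) (ht0 : ∀ k, 0 ≤ t k) (hpos : ∀ k, 0 < s k + t k)
    (k : ℕ) : s k / (s k + t k) ∈ Set.Icc 0 1 :=
  ⟨div_nonneg (hs0 k) (hpos k).le, div_le_one_of_le₀ (by linarith [ht0 k]) (hpos k).le⟩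

-- All increments of the share have the sign of the first one, so the share is monotone.
theorem exists_tendsto_share_of_det_nonneg (hs : ∀ k, s (k + 1) = α * s k + β * t k)
    (ht : ∀ k, t (k + 1) = γ * s k + δ * t k) (hs0 : ∀ k, 0 ≤ s k) (ht0 : ∀ k, 0 ≤ t k)
    (hpos : ∀ k, 0 < s k + t k) (hdet : 0 ≤ α * δ - β * γ) :
    ∃ p, Tendsto (fun k => s k / (s k + t k)) atTop (𝓝 p) := by
  have mem_Icc := share_mem_Icc hs0 ht0 hpos
  rcases le_total 0 (s 1 * t 0 - s 0 * t 1) with h0 | h0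
  · have cross_nonneg : ∀ k, 0 ≤ s (k + 1) * t k - s k * t (k + 1) := fun k => by
      induction k with
      | zero => exact h0
      | succ k ih => rw [cross_succ hs ht]; exact mul_nonneg hdet ih
    have mono : Monotone fun k => s k / (s k + t k) := monotone_nat_of_le_succ fun k => by
      rw [← sub_nonneg, share_succ_sub_share hpos]
      exact div_nonneg (cross_nonneg k) (mul_pos (hpos k) (hpos (k + 1))).le
    exact ⟨_, tendsto_atTop_ciSup mono ⟨1, by rintro _ ⟨k, rfl⟩; exact (mem_Icc k).2⟩⟩
  · have cross_nonpos : ∀ k, s (k + 1) * t k - s k * t (k + 1) ≤ 0 := fun k => by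
      induction k with
      | zero => exact h0
      | succ k ih => rw [cross_succ hs ht]; exact mul_nonpos_of_nonneg_of_nonpos hdet ih
    have anti : Antitone fun k => s k / (s k + t k) := antitone_nat_of_succ_le fun k => by
      rw [← sub_nonpos, share_succ_sub_share hpos]
      exact div_nonpos_of_nonpos_of_nonneg (cross_nonpos k) (mul_pos (hpos k) (hpos (k + 1))).le
    exact ⟨_, tendsto_atTop_ciInf anti ⟨0, by rintro _ ⟨k, rfl⟩; exact (mem_Icc k).1⟩⟩

theorem total_add_two_ge (hs : ∀ k, s (k + 1) = α * s k + β * t k)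
    (ht : ∀ k, t (k + 1) = γ * s k + δ * t k) (hpos : ∀ k, 0 < s k + t k)
    (hdet : α * δ - β * γ ≤ 0) (k : ℕ) :
    (α + δ) * (s (k + 1) + t (k + 1)) ≤ s (k + 2) + t (k + 2) := by
  rw [total_add_two hs ht]
  linarith [mul_nonpos_of_nonpos_of_nonneg hdet (hpos k).le]

-- From the second step on, consecutive increments of the share shrink by the factor
-- `D / (T ^ 2 + D)`, where `T = α + δ` and `D = β * γ - α * δ`.
theorem exists_tendsto_share_of_det_neg (hs : ∀ k, s (k + 1) = α * s k + β * t k)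
    (ht : ∀ k, t (k + 1) = γ * s k + δ * t k) (hpos : ∀ k, 0 < s k + t k) (htr : 0 < α + δ)
    (hdet : α * δ - β * γ < 0) : ∃ p, Tendsto (fun k => s k / (s k + t k)) atTop (𝓝 p) := by
  set T := α + δ
  set D := β * γ - α * δ with hD
  have D_pos : 0 < D := by linarith
  have total_ge : ∀ k, (T ^ 2 + D) * (s (k + 1) + t (k + 1)) ≤ s (k + 3) + t (k + 3) := fun k => by
    rw [total_add_two hs ht (k + 1)]
    have := mul_le_mul_of_nonneg_left (total_add_two_ge hs ht hpos hdet.le k) htr.le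
    nlinarith
  let p k := s k / (s k + t k)
  have increment : ∀ k, p (k + 1) - p k =
      (s (k + 1) * t k - s k * t (k + 1)) / ((s k + t k) * (s (k + 1) + t (k + 1))) :=
    share_succ_sub_share hpos
  have increment_le : ∀ k, |p (k + 3) - p (k + 2)| ≤ D / (T ^ 2 + D) * |p (k + 2) - p (k + 1)| := by
    intro k
    have h1 := hpos (k + 1)
    have h2 := hpos (k + 2)
    have h3 := hpos (k + 3)
    rw [increment (k + 2), increment (k + 1), cross_succ hs ht (k + 1), ← neg_sub (β * γ), ← hD,
      abs_div, abs_div, abs_mul, abs_neg, abs_of_pos D_pos, abs_of_pos (mul_pos h1 h2),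
      abs_of_pos (mul_pos h2 h3), div_mul_div_comm]
    refine div_le_div_of_nonneg_left (by positivity) (by positivity) ?_
    calc (T ^ 2 + D) * ((s (k + 1) + t (k + 1)) * (s (k + 2) + t (k + 2)))
        = (s (k + 2) + t (k + 2)) * ((T ^ 2 + D) * (s (k + 1) + t (k + 1))) := by ring
      _ ≤ (s (k + 2) + t (k + 2)) * (s (k + 3) + t (k + 3)) := by gcongr; exact total_ge k
  have ratio_lt_one : D / (T ^ 2 + D) < 1 := (div_lt_one (by positivity)).2 (by nlinarith)
  refine cauchySeq_tendsto_of_complete (u := p) <| cauchySeq_of_summable_dist <|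
    summable_of_ratio_norm_eventually_le ratio_lt_one ?_
  filter_upwards [eventually_ge_atTop 1] with k hk
  obtain ⟨k, rfl⟩ := Nat.exists_eq_add_of_le' hk
  simpa only [Real.norm_eq_abs, Real.dist_eq, abs_abs, abs_sub_comm] using increment_le k

theorem exists_tendsto_share (hs : ∀ k, s (k + 1) = α * s k + β * t k)
    (ht : ∀ k, t (k + 1) = γ * s k + δ * t k) (hs0 : ∀ k, 0 ≤ s k) (ht0 : ∀ k, 0 ≤ t k)
    (hpos : ∀ k, 0 < s k + t k) (htr : 0 < α + δ) :
    ∃ p, Tendsto (fun k => s k / (s k + t k)) atTop (𝓝 p) :=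
  (le_or_gt 0 (α * δ - β * γ)).elim (exists_tendsto_share_of_det_nonneg hs ht hs0 ht0 hpos)
    (exists_tendsto_share_of_det_neg hs ht hpos htr)

theorem exists_mul_total_le (hβ : 0 ≤ β) (hγ : 0 ≤ γ) (hα : 0 ≤ α) (hδ : 0 ≤ δ)
    (hs : ∀ k, s (k + 1) = α * s k + β * t k) (ht : ∀ k, t (k + 1) = γ * s k + δ * t k)
    (hs0 : ∀ k, 0 ≤ s k) (ht0 : ∀ k, 0 ≤ t k) (hpos : ∀ k, 0 < s k + t k) (htr : 0 < α + δ) :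
    ∃ c, 0 < c ∧ ∀ k, c * (s (k + 1) + t (k + 1)) ≤ s (k + 2) + t (k + 2) := by
  rcases le_or_gt (α * δ - β * γ) 0 with hdet | hdet
  · exact ⟨α + δ, htr, total_add_two_ge hs ht hpos hdet⟩
  · have αδ_pos : 0 < α * δ := by linarith [mul_nonneg hβ hγ]
    have α_pos : 0 < α := hα.lt_of_ne fun h => by simp [← h] at αδ_pos
    have δ_pos : 0 < δ := hδ.lt_of_ne fun h => by simp [← h] at αδ_pos
    refine ⟨min α δ, lt_min α_pos δ_pos, fun k => ?_⟩
    rw [hs (k + 1), ht (k + 1), mul_add]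
    have hs1 := hs0 (k + 1)
    have ht1 := ht0 (k + 1)
    have := mul_le_mul_of_nonneg_right (min_le_left α δ) hs1
    have := mul_le_mul_of_nonneg_right (min_le_right α δ) ht1
    linarith [mul_nonneg hβ ht1, mul_nonneg hγ hs1]

end PlanarRecursion

/-! ### Functions of the first hitting time -/

section FirstHit

variable {α E : Type*}

/-- The function on sequences that evaluates `φ` at the first symbol of `y` and at the number of
steps separating position `1` from the first later occurrence of `a`, and evaluates `ψ` at the
first symbol of `y` if there is no such occurrence. -/
def firstHitFun (a : α) (φ : α → ℕ → E) (ψ : α → E) (y : ℕ → α) : E :=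
  if h : ∃ k, y (k + 1) = a then φ (y 0) (Nat.find h) else ψ (y 0)

theorem firstHitFun_eq {a : α} {y : ℕ → α} {k : ℕ} (φ : α → ℕ → E) (ψ : α → E)
    (hk : y (k + 1) = a) (hlt : ∀ j < k, y (j + 1) ≠ a) :
    firstHitFun a φ ψ y = φ (y 0) k := by
  have h : ∃ k, y (k + 1) = a := ⟨k, hk⟩
  rw [firstHitFun, dif_pos h, (Nat.find_eq_iff h).2 ⟨hk, hlt⟩]

theorem eventually_nhds_forall_lt_eq [TopologicalSpace α] [DiscreteTopology α] (n : ℕ)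
    (y : ℕ → α) : ∀ᶠ z in 𝓝 y, ∀ i < n, z i = y i :=
  (Filter.eventually_all_finite (Set.finite_lt_nat n)).2 fun i _ =>
    tendsto_pure.1 (nhds_discrete α ▸ (continuous_apply i).tendsto y)

theorem continuous_firstHitFun [TopologicalSpace α] [DiscreteTopology α] [TopologicalSpace E]
    (a : α) {φ : α → ℕ → E} {ψ : α → E} (h : ∀ b, Tendsto (φ b) atTop (𝓝 (ψ b))) :
    Continuous (firstHitFun a φ ψ) := by
  refine continuous_iff_continuousAt.2 fun y => ?_
  by_cases hy : ∃ k, y (k + 1) = a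
  · refine (continuousAt_congr ?_).2 (continuousAt_const (y := firstHitFun a φ ψ y))
    filter_upwards [eventually_nhds_forall_lt_eq (Nat.find hy + 2) y] with z hz
    have hit : z (Nat.find hy + 1) = a := by rw [hz _ (by omega), Nat.find_spec hy]
    have not_hit : ∀ j < Nat.find hy, z (j + 1) ≠ a := fun j hj => by
      rw [hz _ (by omega)]; exact Nat.find_min hy hj
    rw [firstHitFun_eq φ ψ hit not_hit, hz 0 (by omega), firstHitFun, dif_pos hy]
  · rw [ContinuousAt, firstHitFun, dif_neg hy]
    refine fun U hU => mem_map.2 ?_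
    obtain ⟨K, hK⟩ := eventually_atTop.1 (h (y 0) hU)
    filter_upwards [eventually_nhds_forall_lt_eq (K + 1) y] with z hz
    rw [Set.mem_preimage, firstHitFun, hz 0 (by omega)]
    split_ifs with hz'
    · refine hK _ (not_lt.1 fun hlt => hy ⟨Nat.find hz', ?_⟩)
      rw [← hz _ (by omega), Nat.find_spec hz']
    · exact mem_of_mem_nhds hU

end FirstHit

/-! ### Weights of first returns to the symbol with a single preimage -/

section ReturnWeight

variable {l : ℕ}

theorem projC_eq_zero_iff [NeZero l] {i : Fin l} : projC i = 0 ↔ i = 0 := by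
  simp only [projC, Fin.val_eq_zero_iff]
  split_ifs with h <;> simp [h]

theorem projC_eq_one_iff [NeZero l] {i : Fin l} : projC i = 1 ↔ i ≠ 0 := by
  simp only [projC, Fin.val_eq_zero_iff]
  split_ifs with h <;> simp [h]

/-- The total `M`-weight of the paths of `k` steps that start at `i` and visit the symbol `0`
exactly once, at their end. -/
def returnWeight [NeZero l] (M : Fin l → Fin l → ℝ) : ℕ → Fin l → ℝ
  | 0, i => if i = 0 then 1 else 0
  | k + 1, i => if i = 0 then 0 else ∑ j, M i j * returnWeight M k j

/-- The sum of the coordinates of `M v` over the fibre of `b` under `projC`. -/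
def stepWeight (M : Fin l → Fin l → ℝ) (b : Fin 2) (v : Fin l → ℝ) : ℝ :=
  ∑ i, if projC i = b then ∑ j, M i j * v j else 0

/-- The factor by which the total return weight over `1ᵏ0` changes when the symbol `b` is
prepended. -/
def weightRatio [NeZero l] (M : Fin l → Fin l → ℝ) (b : Fin 2) (k : ℕ) : ℝ :=
  stepWeight M b (returnWeight M k) / ∑ i, returnWeight M k i

variable {M : Fin l → Fin l → ℝ}

theorem stepWeight_nonneg (hM : ∀ i j, 0 ≤ M i j) {v : Fin l → ℝ} (hv : ∀ i, 0 ≤ v i)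
    (b : Fin 2) : 0 ≤ stepWeight M b v :=
  Finset.sum_nonneg fun i _ => by
    have := Finset.sum_nonneg fun j (_ : j ∈ Finset.univ) => mul_nonneg (hM i j) (hv j)
    positivity

theorem continuous_stepWeight (M : Fin l → Fin l → ℝ) (b : Fin 2) :
    Continuous (stepWeight M b) :=
  continuous_finsetSum _ fun i _ => by split_ifs <;> fun_prop

variable [NeZero l]

theorem returnWeight_succ_zero (k : ℕ) : returnWeight M (k + 1) 0 = 0 := if_pos rfl

theorem returnWeight_succ_of_ne {i : Fin l} (hi : i ≠ 0) (k : ℕ) :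
    returnWeight M (k + 1) i = ∑ j, M i j * returnWeight M k j := if_neg hi

theorem returnWeight_nonneg (hM : ∀ i j, 0 ≤ M i j) (k : ℕ) (i : Fin l) :
    0 ≤ returnWeight M k i := by
  induction k generalizing i with
  | zero => rw [returnWeight]; positivity
  | succ k ih =>
    rw [returnWeight]
    split_ifs
    exacts [le_rfl, Finset.sum_nonneg fun j _ => mul_nonneg (hM i j) (ih j)]

theorem stepWeight_zero (v : Fin l → ℝ) : stepWeight M 0 v = ∑ j, M 0 j * v j := by
  simp [stepWeight, projC_eq_zero_iff]

theorem stepWeight_one_returnWeight (k : ℕ) :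
    stepWeight M 1 (returnWeight M k) = ∑ i, returnWeight M (k + 1) i := by
  simp [stepWeight, returnWeight, projC_eq_one_iff, ite_not]

/-- The normalized return weights converge to `v`. -/
def IsReturnLimit (M : Fin l → Fin l → ℝ) (v : Fin l → ℝ) : Prop :=
  Tendsto (fun k => (∑ i, returnWeight M k i)⁻¹ • returnWeight M k) atTop (𝓝 v)

namespace IsReturnLimit

variable {v : Fin l → ℝ}

theorem tendsto_apply (hv : IsReturnLimit M v) (i : Fin l) :
    Tendsto (fun k => returnWeight M k i / ∑ j, returnWeight M k j) atTop (𝓝 (v i)) := by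
  simpa [div_eq_inv_mul] using (tendsto_pi_nhds.1 hv i)

theorem nonneg (hv : IsReturnLimit M v) (hM : ∀ i j, 0 ≤ M i j) (i : Fin l) : 0 ≤ v i :=
  ge_of_tendsto' (hv.tendsto_apply i) fun k => div_nonneg (returnWeight_nonneg hM k i)
    (Finset.sum_nonneg fun j _ => returnWeight_nonneg hM k j)

theorem sum_eq_one (hv : IsReturnLimit M v) (hpos : ∀ k, 0 < ∑ i, returnWeight M k i) :
    ∑ i, v i = 1 := by
  refine tendsto_nhds_unique (tendsto_finsetSum _ fun i _ => hv.tendsto_apply i) ?_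
  simp only [← Finset.sum_div, div_self (hpos _).ne', tendsto_const_nhds]

theorem apply_zero (hv : IsReturnLimit M v) : v 0 = 0 := by
  refine tendsto_nhds_unique ((tendsto_add_atTop_iff_nat 1).2 (hv.tendsto_apply 0)) ?_
  simp only [returnWeight_succ_zero, zero_div, tendsto_const_nhds]

theorem exists_returnWeight_pos (hv : IsReturnLimit M v) {i : Fin l} (hi : 0 < v i)
    (hpos : ∀ k, 0 < ∑ i, returnWeight M k i) : ∃ k, 0 < returnWeight M k i := by
  obtain ⟨k, hk⟩ := ((hv.tendsto_apply i).eventually (lt_mem_nhds hi)).exists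
  exact ⟨k, (div_pos_iff_of_pos_right (hpos k)).1 hk⟩

theorem tendsto_weightRatio (hv : IsReturnLimit M v) (b : Fin 2) :
    Tendsto (weightRatio M b) atTop (𝓝 (stepWeight M b v)) := by
  refine (((continuous_stepWeight M b).tendsto v).comp hv).congr fun k => ?_
  simp only [Function.comp_apply, stepWeight, weightRatio, Pi.smul_apply, smul_eq_mul,
    div_eq_inv_mul, Finset.mul_sum, mul_ite, mul_zero, mul_left_comm]

-- Off the symbol `0`, the limit is an eigenvector of `M`.
theorem mulVec_eq (hv : IsReturnLimit M v) (hpos : ∀ k, 0 < ∑ i, returnWeight M k i)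
    {i : Fin l} (hi : i ≠ 0) : ∑ j, M i j * v j = v i * stepWeight M 1 v := by
  refine tendsto_nhds_unique
    (tendsto_finsetSum _ fun j _ => (hv.tendsto_apply j).const_mul (M i j)) ?_
  refine (((tendsto_add_atTop_iff_nat 1).2 (hv.tendsto_apply i)).mul
    (hv.tendsto_weightRatio 1)).congr fun k => ?_
  rw [weightRatio, stepWeight_one_returnWeight, div_mul_div_cancel₀ (hpos (k + 1)).ne',
    returnWeight_succ_of_ne hi, Finset.sum_div]
  simp only [mul_div_assoc]

-- If `∑ j, M 0 j * v j` vanished, then `v` would vanish along every path that starts at `0`.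
theorem stepWeight_zero_pos (hv : IsReturnLimit M v) (hM : ∀ i j, 0 ≤ M i j)
    (hpos : ∀ k, 0 < ∑ i, returnWeight M k i) {i : Fin l} (hi : 0 < v i)
    (hpath : Relation.ReflTransGen (fun a b => 0 < M a b) 0 i) : 0 < stepWeight M 0 v := by
  refine (stepWeight_nonneg hM (hv.nonneg hM) 0).lt_of_ne fun hzero => hi.ne' ?_
  have eq_zero_of_step : ∀ a b, 0 < M a b → ∑ j, M a j * v j = 0 → v b = 0 := fun a b hab h =>
    (mul_eq_zero.1 ((Finset.sum_eq_zero_iff_of_nonneg fun j _ =>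
      mul_nonneg (hM a j) (hv.nonneg hM j)).1 h b (Finset.mem_univ b))).resolve_left hab.ne'
  induction hpath with
  | refl => exact hv.apply_zero
  | @tail a b _ hab ih =>
    refine eq_zero_of_step a b hab ?_
    by_cases ha : a = 0
    · rw [ha, ← stepWeight_zero, hzero]
    · by_cases hva : 0 < v a
      · exact absurd (ih hva) hva.ne'
      · rw [hv.mulVec_eq hpos ha, le_antisymm (not_lt.1 hva) (hv.nonneg hM a), zero_mul]

end IsReturnLimit

end ReturnWeight

section ReturnWeightSFT

variable {l : ℕ} [NeZero l] {R : Fin l → Fin l → Prop} {F : Fin l → Fin l → ℝ}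

theorem reflTransGen_of_mem_sft {α : Type*} {R : α → α → Prop} {x : ℕ → α} (hx : x ∈ sft R)
    (n : ℕ) : Relation.ReflTransGen R (x 0) (x n) := by
  induction n with
  | zero => exact .refl
  | succ n ih => exact ih.tail (hx n)

theorem returnWeight_transitionWeight_pos {x : ℕ → Fin l} {k : ℕ} (hx : x ∈ sft R)
    (hk : x k = 0) (hlt : ∀ j < k, x j ≠ 0) :
    0 < returnWeight (transitionWeight R F) k (x 0) := by
  induction k generalizing x with
  | zero => simp [returnWeight, hk]
  | succ k ih =>
    rw [returnWeight_succ_of_ne (hlt 0 k.succ_pos)]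
    have rest_pos := ih (shift_mem_sft hx) hk fun j hj => hlt (j + 1) (by omega)
    refine Finset.sum_pos' (fun j _ => mul_nonneg (transitionWeight_nonneg R F _ j)
      (returnWeight_nonneg (transitionWeight_nonneg R F) k j)) ⟨x 1, Finset.mem_univ _, ?_⟩
    exact mul_pos (transitionWeight_pos_iff.2 (hx 0)) rest_pos

theorem exists_mem_sft_of_returnWeight_pos {x₀ : ℕ → Fin l} (hx₀ : x₀ ∈ sft R) (h0 : x₀ 0 = 0)
    {k : ℕ} {i : Fin l} (hi : 0 < returnWeight (transitionWeight R F) k i) :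
    ∃ x ∈ sft R, x 0 = i := by
  induction k generalizing i with
  | zero => exact ⟨x₀, hx₀, by_contra fun h => by simp [returnWeight, ← h0, Ne.symm h] at hi⟩
  | succ k ih =>
    have hi0 : i ≠ 0 := fun h => by simp [h, returnWeight_succ_zero] at hi
    rw [returnWeight_succ_of_ne hi0] at hi
    have hM := transitionWeight_nonneg R F
    obtain ⟨j, -, hj⟩ := (Finset.sum_pos_iff_of_nonneg fun j _ =>
      mul_nonneg (hM i j) (returnWeight_nonneg hM k j)).1 hi
    obtain ⟨x, hx, rfl⟩ := ih (pos_of_mul_pos_right hj (hM i j))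
    have hij : R i (x 0) :=
      transitionWeight_pos_iff.1 ((hM i (x 0)).lt_of_ne fun h => by simp [← h] at hj)
    exact ⟨splice 1 (fun _ => i) x, splice_mem_sft (fun t ht => by omega) (fun t _ => hij) hx,
      splice_of_lt one_pos _ _⟩

theorem IsReturnLimit.stepWeight_zero_pos_of_irreducible {v : Fin l → ℝ}
    (hv : IsReturnLimit (transitionWeight R F) v) (hX : IrreducibleShift (sft R))
    (hpos : ∀ k, 0 < ∑ i, returnWeight (transitionWeight R F) k i)
    {x₀ : ℕ → Fin l} (hx₀ : x₀ ∈ sft R) (h0 : x₀ 0 = 0) :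
    0 < stepWeight (transitionWeight R F) 0 v := by
  obtain ⟨i, -, hi⟩ := (Finset.sum_pos_iff_of_nonneg fun i _ =>
    hv.nonneg (transitionWeight_nonneg R F) i).1 ((hv.sum_eq_one hpos).symm ▸ one_pos)
  obtain ⟨k, hk⟩ := hv.exists_returnWeight_pos hi hpos
  obtain ⟨x, hx, rfl⟩ := exists_mem_sft_of_returnWeight_pos hx₀ h0 hk
  obtain ⟨p, hp⟩ := exists_bounded_connection hX
  obtain ⟨L, -, z, hz, hzx₀, rfl⟩ := hp x₀ hx₀ x hx 1 le_rfl
  refine hv.stepWeight_zero_pos (transitionWeight_nonneg R F) hpos hi ?_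
  simpa [transitionWeight_pos_iff, shift_iterate_apply, hzx₀ 0 one_pos, h0] using
    reflTransGen_of_mem_sft hz (1 + L)

end ReturnWeightSFT

section ReturnWeightThree

variable {M : Fin 3 → Fin 3 → ℝ}

theorem sum_returnWeight_three (k : ℕ) :
    ∑ i, returnWeight M (k + 1) i = returnWeight M (k + 1) 1 + returnWeight M (k + 1) 2 := by
  rw [Fin.sum_univ_three, returnWeight_succ_zero, zero_add]

theorem returnWeight_add_two_three {i : Fin 3} (hi : i ≠ 0) (k : ℕ) :
    returnWeight M (k + 2) i =
      M i 1 * returnWeight M (k + 1) 1 + M i 2 * returnWeight M (k + 1) 2 := by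
  rw [returnWeight_succ_of_ne hi, Fin.sum_univ_three, returnWeight_succ_zero, mul_zero, zero_add]

theorem trace_pos_of_not_antidiagonal (hM : ∀ i j, 0 ≤ M i j)
    (hpos : 0 < ∑ i, returnWeight M 3 i)
    (hanti : ¬ (M 1 1 = 0 ∧ M 2 2 = 0 ∧ 0 < M 1 2 ∧ 0 < M 2 1)) : 0 < M 1 1 + M 2 2 := by
  refine (add_nonneg (hM 1 1) (hM 2 2)).lt_of_ne fun h => hpos.ne' ?_
  have h11 : M 1 1 = 0 := by linarith [hM 1 1, hM 2 2]
  have h22 : M 2 2 = 0 := by linarith [hM 1 1, hM 2 2]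
  have hprod : M 1 2 = 0 ∨ M 2 1 = 0 := by
    by_contra! hne
    exact hanti ⟨h11, h22, (hM 1 2).lt_of_ne' hne.1, (hM 2 1).lt_of_ne' hne.2⟩
  simp only [sum_returnWeight_three, returnWeight_add_two_three (one_ne_zero (α := Fin 3)),
    returnWeight_add_two_three (show (2 : Fin 3) ≠ 0 by decide), h11, h22]
  rcases hprod with h | h <;> simp [h]

theorem exists_isReturnLimit (hM : ∀ i j, 0 ≤ M i j) (hpos : ∀ k, 0 < ∑ i, returnWeight M k i)
    (htr : 0 < M 1 1 + M 2 2) : ∃ v, IsReturnLimit M v := by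
  have total_pos k := sum_returnWeight_three (M := M) k ▸ hpos (k + 1)
  obtain ⟨p, hp⟩ := exists_tendsto_share
    (fun k => returnWeight_add_two_three one_ne_zero k)
    (fun k => returnWeight_add_two_three (show (2 : Fin 3) ≠ 0 by decide) k)
    (fun k => returnWeight_nonneg hM _ _) (fun k => returnWeight_nonneg hM _ _) total_pos htr
  refine ⟨![0, p, 1 - p], (tendsto_add_atTop_iff_nat 1).1 (tendsto_pi_nhds.2 fun i => ?_)⟩
  simp only [sum_returnWeight_three, Pi.smul_apply, smul_eq_mul, ← div_eq_inv_mul]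
  fin_cases i
  · simp [returnWeight_succ_zero]
  · exact hp
  · refine (hp.const_sub 1).congr fun k => ?_
    rw [one_sub_div (total_pos k).ne', add_sub_cancel_left]
    rfl

theorem IsReturnLimit.stepWeight_one_pos {v : Fin 3 → ℝ} (hv : IsReturnLimit M v)
    (hM : ∀ i j, 0 ≤ M i j) (hpos : ∀ k, 0 < ∑ i, returnWeight M k i)
    (htr : 0 < M 1 1 + M 2 2) : 0 < stepWeight M 1 v := by
  obtain ⟨c, hc, hle⟩ := exists_mul_total_le (hM 1 2) (hM 2 1) (hM 1 1) (hM 2 2)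
    (fun k => returnWeight_add_two_three one_ne_zero k)
    (fun k => returnWeight_add_two_three (show (2 : Fin 3) ≠ 0 by decide) k)
    (fun k => returnWeight_nonneg hM _ _) (fun k => returnWeight_nonneg hM _ _)
    (fun k => sum_returnWeight_three (M := M) k ▸ hpos (k + 1)) htr
  refine hc.trans_le (ge_of_tendsto ((tendsto_add_atTop_iff_nat 2).2 (hv.tendsto_weightRatio 1))
    (.of_forall fun k => ?_))
  rw [weightRatio, stepWeight_one_returnWeight, le_div_iff₀ (hpos _), sum_returnWeight_three,
    sum_returnWeight_three]
  exact hle k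

end ReturnWeightThree

/-! ### The potential of the factor measure -/

section ReturnPotential

variable {l : ℕ} [NeZero l] {R : Fin l → Fin l → Prop} {F : Fin l → Fin l → ℝ}
  {f : (ℕ → Fin l) → ℝ}

/-- The candidate potential on the factor: the logarithmic increment of the weights `gseq` under
prepending `y 0`, which is determined by the word of `y` up to its first return to `0`; `v` is the
limit direction of the return weights and supplies the value when there is no return. -/
def returnPotential (M : Fin l → Fin l → ℝ) (v : Fin l → ℝ) : (ℕ → Fin 2) → ℝ :=
  firstHitFun 0 (fun b k => Real.log (weightRatio M b k)) fun b => Real.log (stepWeight M b v)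

theorem continuous_returnPotential {M : Fin l → Fin l → ℝ} {v : Fin l → ℝ}
    (hv : IsReturnLimit M v) (hpos : ∀ b, 0 < stepWeight M b v) :
    Continuous (returnPotential M v) :=
  continuous_firstHitFun 0 fun b =>
    (hv.tendsto_weightRatio b).log (hpos b).ne'

theorem startWeight_eq_zero {k kY : ℕ} {X : Set (ℕ → Fin k)} {πs : Fin k → Fin kY}
    {f : (ℕ → Fin k) → ℝ} {n : ℕ} {y : ℕ → Fin kY} {i : Fin k} (hi : πs i ≠ y 0) :
    startWeight X πs f n y i = 0 :=
  Finset.sum_eq_zero fun _ _ => if_neg fun h => hi (congrFun h 0)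

theorem startWeight_add_of_first_zero (hf : ∀ x, f x = F (x 0) (x 1)) {k : ℕ} (n : ℕ)
    {y : ℕ → Fin 2} (hk : y k = 0) (hlt : ∀ j < k, y j ≠ 0) (i : Fin l) :
    startWeight (sft R) projC f (n + k) y i =
      startWeight (sft R) projC f n (shift^[k] y) 0 * returnWeight (transitionWeight R F) k i := by
  induction k generalizing y i with
  | zero =>
    by_cases hi : i = 0
    · simp [hi, returnWeight]
    · have : projC i ≠ y 0 := by rwa [hk, Ne, projC_eq_zero_iff]
      simp [returnWeight, hi, startWeight_eq_zero this]
  | succ k ih =>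
    have y_zero : y 0 = 1 := Fin.eq_one_of_ne_zero _ (hlt 0 k.succ_pos)
    rw [← add_assoc, startWeight_succ hf, returnWeight, y_zero]
    simp only [projC_eq_one_iff, ite_not]
    split_ifs
    · rw [mul_zero]
    · simp only [ih (y := shift y) hk fun j hj => hlt (j + 1) (by omega), Finset.mul_sum,
        Function.iterate_succ_apply, mul_left_comm]

theorem returnPotential_eq_log_sub_log (hf : ∀ x, f x = F (x 0) (x 1)) (v : Fin l → ℝ)
    {k m : ℕ} (hm : k + 1 ≤ m) {y : ℕ → Fin 2} (hk : y (k + 1) = 0)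
    (hlt : ∀ j < k, y (j + 1) ≠ 0) (hpos : 0 < gseq (sft R) projC f (m + 1) y)
    (hpos' : 0 < gseq (sft R) projC f m (shift y)) :
    returnPotential (transitionWeight R F) v y =
      Real.log (gseq (sft R) projC f (m + 1) y) - Real.log (gseq (sft R) projC f m (shift y)) := by
  obtain ⟨n, rfl⟩ : ∃ n, m = n + k + 1 := ⟨m - (k + 1), by omega⟩
  set w := startWeight (sft R) projC f n (shift^[k] (shift y)) 0
  have factor := startWeight_add_of_first_zero (R := R) hf n (y := shift y) hk hlt
  have gseq_shift : gseq (sft R) projC f (n + k + 1) (shift y) =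
      w * ∑ i, returnWeight (transitionWeight R F) k i := by
    rw [gseq_succ, Finset.mul_sum]
    exact Finset.sum_congr rfl fun i _ => factor i
  have gseq_self : gseq (sft R) projC f (n + k + 1 + 1) y =
      w * stepWeight (transitionWeight R F) (y 0) (returnWeight (transitionWeight R F) k) := by
    simp only [gseq_succ, startWeight_succ hf, factor, stepWeight, Finset.mul_sum, mul_ite,
      mul_zero, mul_left_comm, w]
  have w_ne_zero : w ≠ 0 := fun h => by simp [gseq_shift, h] at hpos'
  rw [returnPotential, firstHitFun_eq _ _ hk hlt, weightRatio,
    ← Real.log_div hpos.ne' hpos'.ne', gseq_self, gseq_shift, mul_div_mul_left _ _ w_ne_zero]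

end ReturnPotential

/-! ### Comparison of Birkhoff sums with an almost additive sequence -/

section Telescoping

variable {α : Type*}

theorem eventually_birk_eq_sub {Z : Set (ℕ → α)} {g : (ℕ → α) → ℝ} {φ : ℕ → (ℕ → α) → ℝ}
    (hZ : ∀ z ∈ Z, shift z ∈ Z)
    (hφ : ∀ z ∈ Z, ∀ᶠ m in atTop, g z = φ (m + 1) z - φ m (shift z)) (n : ℕ) {z : ℕ → α}
    (hz : z ∈ Z) : ∀ᶠ m in atTop, birk g n z = φ (n + m) z - φ m (shift^[n] z) := by
  induction n generalizing z with
  | zero => simp [birk]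
  | succ n ih =>
    filter_upwards [ih (hZ z hz), (tendsto_add_atTop_nat n).eventually (hφ z hz)] with m tail head
    rw [birk_succ, tail, head, add_right_comm n 1 m, add_comm m n, Function.iterate_succ_apply]
    ring

theorem continuous_birk [TopologicalSpace α] {g : (ℕ → α) → ℝ} (hg : Continuous g) (n : ℕ) :
    Continuous (birk g n) := by
  have continuous_shift : Continuous (shift : (ℕ → α) → ℕ → α) :=
    continuous_pi fun i => continuous_apply (i + 1)
  exact continuous_finsetSum _ fun i _ => hg.comp (continuous_shift.iterate i)

theorem continuous_log_gseq {kX kY : ℕ} (X : Set (ℕ → Fin kX)) (πs : Fin kX → Fin kY)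
    (f : (ℕ → Fin kX) → ℝ) (n : ℕ) : Continuous fun y => Real.log (gseq X πs f n y) := by
  refine IsLocallyConstant.continuous ((IsLocallyConstant.iff_eventually_eq _).2 fun y => ?_)
  filter_upwards [eventually_nhds_forall_lt_eq n y] with z hz
  rw [gseq_congr (initialWord_eq_initialWord_iff.2 hz)]

theorem tendsto_splice [TopologicalSpace α] (x x' : ℕ → α) :
    Tendsto (fun n => splice n x x') atTop (𝓝 x) := by
  refine tendsto_pi_nhds.2 fun i => tendsto_const_nhds.congr' ?_
  filter_upwards [eventually_gt_atTop i] with n hn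
  rw [splice_of_lt hn]

theorem sft_subset_closure_frequently_eq_zero {S : Fin 2 → Fin 2 → Prop}
    (hS : ∀ i j, i = 1 ∨ j = 1 → S i j) :
    sft S ⊆ closure {y ∈ sft S | ∃ᶠ j in atTop, y j = 0} := by
  intro y hy
  let alternating : ℕ → Fin 2 := fun j => if Even j then 1 else 0
  have alternating_mem : alternating ∈ sft S := fun n => hS _ _ <| by
    by_cases hn : Even n <;> simp [alternating, hn, Nat.even_add_one]
  refine mem_closure_of_tendsto (tendsto_splice y alternating) (.of_forall fun K => ⟨?_, ?_⟩)
  · exact splice_mem_sft (fun t _ => hy t) (fun t _ => hS _ _ (.inr (if_pos Even.zero)))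
      alternating_mem
  · refine frequently_atTop.2 fun N => ⟨K + (2 * N + 1), by omega, ?_⟩
    rw [splice_add]
    exact if_neg (by simp)

theorem exp_neg_mul_le_and_le_exp_mul_iff {a b d K : ℝ} (ha : 0 < a) (hb : 0 < b) (hd : 0 < d) :
    Real.exp (-K) * (a * b) ≤ d ∧ d ≤ Real.exp K * (a * b) ↔
      |Real.log d - (Real.log a + Real.log b)| ≤ K := by
  rw [← Real.log_mul ha.ne' hb.ne', abs_le, ← Real.log_le_log_iff (by positivity) hd,
    ← Real.log_le_log_iff hd (by positivity), Real.log_mul (Real.exp_ne_zero _) (by positivity),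
    Real.log_mul (Real.exp_ne_zero _) (by positivity), Real.log_exp, Real.log_exp,
    le_sub_iff_add_le, sub_le_iff_le_add]

end Telescoping

section PotentialBound

variable {l : ℕ} [NeZero l] {R : Fin l → Fin l → Prop} {F : Fin l → Fin l → ℝ}
  {f : (ℕ → Fin l) → ℝ} {S : Fin 2 → Fin 2 → Prop}

theorem eventually_returnPotential_eq (hf : ∀ x, f x = F (x 0) (x 1)) (v : Fin l → ℝ)
    {y : ℕ → Fin 2} (hzero : ∃ k, y (k + 1) = 0) (hpos : ∀ n, 0 < gseq (sft R) projC f n y)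
    (hpos' : ∀ n, 0 < gseq (sft R) projC f n (shift y)) :
    ∀ᶠ m in atTop, returnPotential (transitionWeight R F) v y =
      Real.log (gseq (sft R) projC f (m + 1) y) - Real.log (gseq (sft R) projC f m (shift y)) := by
  filter_upwards [eventually_ge_atTop (Nat.find hzero + 1)] with m hm
  exact returnPotential_eq_log_sub_log hf v hm (Nat.find_spec hzero)
    (fun j hj => Nat.find_min hzero hj) (hpos _) (hpos' _)

-- On the dense set of points in which `0` recurs the Birkhoff sum telescopes to
-- `log g_{n+m} y - log g_m (shift^[n] y)`.
theorem abs_birk_returnPotential_sub_log_gseq_le (hf : ∀ x, f x = F (x 0) (x 1)) {v : Fin l → ℝ}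
    (hv : Continuous (returnPotential (transitionWeight R F) v))
    (hS : ∀ i j, i = 1 ∨ j = 1 → S i j) (hpos : ∀ y ∈ sft S, ∀ n, 0 < gseq (sft R) projC f n y)
    {n : ℕ} {c : ℝ}
    (hc : ∀ y ∈ sft S, ∀ m, 1 ≤ m →
      |Real.log (gseq (sft R) projC f (n + m) y) - (Real.log (gseq (sft R) projC f n y) +
        Real.log (gseq (sft R) projC f m (shift^[n] y)))| ≤ c) {y : ℕ → Fin 2} (hy : y ∈ sft S) :
    |birk (returnPotential (transitionWeight R F) v) n y -
      Real.log (gseq (sft R) projC f n y)| ≤ c := by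
  set Z := {y ∈ sft S | ∃ᶠ j in atTop, y j = 0}
  have shift_mem_Z : ∀ z ∈ Z, shift z ∈ Z := fun z hz =>
    ⟨shift_mem_sft hz.1, (frequently_map (m := fun j => j + 1) (P := fun j => z j = 0)).1
      (by rw [map_add_atTop_eq_nat]; exact hz.2)⟩
  have telescoping := eventually_birk_eq_sub
    (φ := fun n y => Real.log (gseq (sft R) projC f n y)) shift_mem_Z fun z hz =>
    eventually_returnPotential_eq (R := R) hf v (shift_mem_Z z hz).2.exists (hpos z hz.1)
      (hpos _ (shift_mem_sft hz.1))
  have bound_Z : Z ⊆ {z | |birk (returnPotential (transitionWeight R F) v) n z -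
      Real.log (gseq (sft R) projC f n z)| ≤ c} := fun z hz => by
    obtain ⟨m, hm, hm1⟩ := ((telescoping n hz).and (eventually_ge_atTop 1)).exists
    rw [Set.mem_ofPred_eq, hm, sub_right_comm, sub_sub]
    exact hc z hz.1 m hm1
  have isClosed_bound := isClosed_le
    ((continuous_birk hv n).sub (continuous_log_gseq (sft R) projC f n)).abs
    (continuous_const (y := c))
  exact closure_minimal bound_Z isClosed_bound (sft_subset_closure_frequently_eq_zero hS hy)

theorem exists_mem_sft_eq_zero_iff (hY : sft S ⊆ (fun x => projC ∘ x) '' sft R)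
    (hS : ∀ i j, i = 1 ∨ j = 1 → S i j) (k : ℕ) : ∃ x ∈ sft R, ∀ i, x i = 0 ↔ i = k := by
  let y : ℕ → Fin 2 := fun i => if i = k then 0 else 1
  have hy : y ∈ sft S := fun n => hS _ _ <| by
    by_cases hn : n = k <;> simp [y, hn]
  obtain ⟨x, hx, hxy : projC ∘ x = y⟩ := hY hy
  refine ⟨x, hx, fun i => ?_⟩
  rw [← projC_eq_zero_iff, ← Function.comp_apply (f := projC), hxy]
  simp [y]

theorem sum_returnWeight_pos (hY : sft S ⊆ (fun x => projC ∘ x) '' sft R)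
    (hS : ∀ i j, i = 1 ∨ j = 1 → S i j) (F : Fin l → Fin l → ℝ) (k : ℕ) :
    0 < ∑ i, returnWeight (transitionWeight R F) k i := by
  obtain ⟨x, hx, hx0⟩ := exists_mem_sft_eq_zero_iff hY hS k
  refine Finset.sum_pos' (fun i _ => returnWeight_nonneg (transitionWeight_nonneg R F) k i)
    ⟨x 0, Finset.mem_univ _, returnWeight_transitionWeight_pos hx ((hx0 k).2 rfl) ?_⟩
  exact fun j hj h => hj.ne ((hx0 j).1 h)

end PotentialBound

section ThreeSymbols

variable {R : Fin 3 → Fin 3 → Prop} {F : Fin 3 → Fin 3 → ℝ} {f : (ℕ → Fin 3) → ℝ}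
  {S : Fin 2 → Fin 2 → Prop} {B : ℝ}

theorem exists_continuous_returnPotential (hX : IrreducibleShift (sft R))
    (hY : sft S ⊆ (fun x => projC ∘ x) '' sft R) (hS : ∀ i j, i = 1 ∨ j = 1 → S i j)
    (hanti : ¬ (¬ R 1 1 ∧ ¬ R 2 2 ∧ R 1 2 ∧ R 2 1)) (F : Fin 3 → Fin 3 → ℝ) :
    ∃ v, Continuous (returnPotential (transitionWeight R F) v) := by
  have hM := transitionWeight_nonneg R F
  have return_pos := sum_returnWeight_pos hY hS F
  have trace_pos := trace_pos_of_not_antidiagonal hM (return_pos 3) fun h =>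
    hanti ⟨fun h' => h.1.not_gt (transitionWeight_pos_iff.2 h'),
      fun h' => h.2.1.not_gt (transitionWeight_pos_iff.2 h'),
      transitionWeight_pos_iff.1 h.2.2.1, transitionWeight_pos_iff.1 h.2.2.2⟩
  obtain ⟨v, hv⟩ := exists_isReturnLimit hM return_pos trace_pos
  obtain ⟨x₀, hx₀, hx₀_zero⟩ := exists_mem_sft_eq_zero_iff hY hS 0
  exact ⟨v, continuous_returnPotential hv <| Fin.forall_fin_two.2
    ⟨hv.stepWeight_zero_pos_of_irreducible hX return_pos hx₀ ((hx₀_zero 0).2 rfl),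
      hv.stepWeight_one_pos hM return_pos trace_pos⟩⟩

theorem exists_continuous_abs_birk_sub_log_gseq_le (hX : IrreducibleShift (sft R))
    (hY : (fun x => projC ∘ x) '' sft R = sft S) (hS : ∀ i j, i = 1 ∨ j = 1 → S i j)
    (hanti : ¬ (¬ R 1 1 ∧ ¬ R 2 2 ∧ R 1 2 ∧ R 2 1)) (hf : ∀ x, f x = F (x 0) (x 1))
    (hB : ∀ x, |f x| ≤ B) :
    ∃ g : (ℕ → Fin 2) → ℝ, Continuous g ∧ ∀ n c,
      (∀ y ∈ sft S, ∀ m, 1 ≤ m →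
        Real.exp (-c) * (gseq (sft R) projC f n y * gseq (sft R) projC f m (shift^[n] y)) ≤
            gseq (sft R) projC f (n + m) y ∧
          gseq (sft R) projC f (n + m) y ≤
            Real.exp c * (gseq (sft R) projC f n y * gseq (sft R) projC f m (shift^[n] y))) →
      ∀ y ∈ sft S, |birk g n y - Real.log (gseq (sft R) projC f n y)| ≤ c := by
  obtain ⟨v, hv⟩ := exists_continuous_returnPotential hX hY.ge hS hanti F
  have weight_pos : ∀ y ∈ sft S, ∀ n, 0 < gseq (sft R) projC f n y := by
    rw [← hY]
    rintro _ ⟨x, hx, rfl⟩ n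
    exact gseq_pos hB n hx
  refine ⟨_, hv, fun n c hc y hy =>
    abs_birk_returnPotential_sub_log_gseq_le hf hv hS weight_pos (fun z hz m hm => ?_) hy⟩
  exact (exp_neg_mul_le_and_le_exp_mul_iff (weight_pos z hz n)
    (weight_pos _ (shift_iterate_mem_sft hz n) m) (weight_pos z hz _)).1 (hc z hz m hm)

end ThreeSymbols

/-! ### The factor of a Gibbs measure -/

section Factor

variable {kX kY : ℕ} {πs : Fin kX → Fin kY} {f : (ℕ → Fin kX) → ℝ} {μ : Measure (ℕ → Fin kX)}
  {X : Set (ℕ → Fin kX)} {B : ℝ}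

theorem LogGibbsBounds.of_abs_sub_le {α : Type*} [MeasurableSpace α] {ν : Measure (ℕ → α)}
    {Y : Set (ℕ → α)} {φ ψ : ℕ → (ℕ → α) → ℝ} {P : ℝ} {c d : ℕ → ℝ}
    (h : LogGibbsBounds ν Y φ P c) (hd : ∀ n, 1 ≤ n → ∀ y ∈ Y, |ψ n y - φ n y| ≤ d n) :
    LogGibbsBounds ν Y ψ P fun n => c n + d n := fun y hy n hn => by
  refine ⟨(h y hy n hn).1, abs_le.2 ?_⟩
  have := abs_le.1 (h y hy n hn).2
  have := abs_le.1 (hd n hn y hy)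
  constructor <;> linarith

theorem IsInvariantOn.map (hμ : IsInvariantOn μ X) (hX : MeasurableSet X)
    (hY : MeasurableSet ((fun x => πs ∘ x) '' X)) :
    IsInvariantOn (μ.map fun x => πs ∘ x) ((fun x => πs ∘ x) '' X) := by
  have hπ := measurable_comp_left πs
  have := hμ.1
  have := Measure.isProbabilityMeasure_map (μ := μ) hπ.aemeasurable
  refine ⟨this, (mem_ae_iff_prob_eq_one hY).1 ((ae_map_iff hπ.aemeasurable hY).2 ?_), ?_⟩
  · filter_upwards [hμ.ae_mem hX] with x hx using ⟨x, hx, rfl⟩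
  · intro A hA
    rw [Measure.map_apply hπ (measurable_shift hA), Measure.map_apply hπ hA,
      ← hμ.2.2 _ (hπ hA)]
    rfl

theorem exists_logGibbsBounds_map (hX : MeasurableSet X) (hB : ∀ x, |f x| ≤ B)
    (hμ : IsInvariantOn μ X) (hμf : GibbsFun X f μ) :
    ∃ P c, LogGibbsBounds (μ.map fun x => πs ∘ x) ((fun x => πs ∘ x) '' X)
      (fun n y => Real.log (gseq X πs f n y)) P fun _ => c := by
  have := hμ.1
  obtain ⟨P, c, hPc⟩ := (gibbsFun_iff (hμ.ae_mem hX)).1 hμf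
  exact ⟨P, c, hPc.map (hμ.ae_mem hX) hB⟩

variable {g : (ℕ → Fin kY) → ℝ}

theorem weakGibbsFun_map (hX : MeasurableSet X) (hY : MeasurableSet ((fun x => πs ∘ x) '' X))
    (hB : ∀ x, |f x| ≤ B) (hμ : IsInvariantOn μ X) (hμf : GibbsFun X f μ) {d : ℕ → ℝ}
    (hlim : Tendsto (fun n : ℕ => d n / n) atTop (𝓝 0))
    (hd : ∀ n, 1 ≤ n → ∀ y ∈ (fun x => πs ∘ x) '' X,
      |birk g n y - Real.log (gseq X πs f n y)| ≤ d n) :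
    WeakGibbsFun ((fun x => πs ∘ x) '' X) g (μ.map fun x => πs ∘ x) := by
  obtain ⟨P, c, hPc⟩ := exists_logGibbsBounds_map (πs := πs) hX hB hμ hμf
  refine (weakGibbsFun_iff ((hμ.map hX hY).ae_mem hY)).2 ⟨P, _, ?_, hPc.of_abs_sub_le hd⟩
  simpa [add_div] using (tendsto_const_div_atTop_nhds_zero_nat c).add hlim

theorem gibbsFun_map (hX : MeasurableSet X) (hY : MeasurableSet ((fun x => πs ∘ x) '' X))
    (hB : ∀ x, |f x| ≤ B) (hμ : IsInvariantOn μ X) (hμf : GibbsFun X f μ) {d : ℝ}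
    (hd : ∀ n, 1 ≤ n → ∀ y ∈ (fun x => πs ∘ x) '' X,
      |birk g n y - Real.log (gseq X πs f n y)| ≤ d) :
    GibbsFun ((fun x => πs ∘ x) '' X) g (μ.map fun x => πs ∘ x) := by
  obtain ⟨P, c, hPc⟩ := exists_logGibbsBounds_map (πs := πs) hX hB hμ hμf
  exact (gibbsFun_iff ((hμ.map hX hY).ae_mem hY)).2 ⟨P, c + d, hPc.of_abs_sub_le hd⟩

theorem shift_iterate_mem_image (hX : ∀ x ∈ X, ∀ n, shift^[n] x ∈ X) {y : ℕ → Fin kY}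
    (hy : y ∈ (fun x => πs ∘ x) '' X) (n : ℕ) : shift^[n] y ∈ (fun x => πs ∘ x) '' X := by
  obtain ⟨x, hx, rfl⟩ := hy
  exact ⟨shift^[n] x, hX x hx n, funext fun i => by simp [shift_iterate_apply]⟩

theorem gseq_pos_of_mem_image (hB : ∀ x, |f x| ≤ B) (n : ℕ) {y : ℕ → Fin kY}
    (hy : y ∈ (fun x => πs ∘ x) '' X) : 0 < gseq X πs f n y := by
  obtain ⟨x, hx, rfl⟩ := hy
  exact gseq_pos hB n hx

theorem log_gseq_add_le (hX : ∀ x ∈ X, ∀ n, shift^[n] x ∈ X) (hB : ∀ x, |f x| ≤ B)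
    {y : ℕ → Fin kY} (hy : y ∈ (fun x => πs ∘ x) '' X) (n m : ℕ) :
    Real.log (gseq X πs f (n + m) y) ≤
      Real.log (gseq X πs f n y) + Real.log (gseq X πs f m (shift^[n] y)) := by
  rw [← Real.log_mul (gseq_pos_of_mem_image hB n hy).ne'
    (gseq_pos_of_mem_image hB m (shift_iterate_mem_image hX hy n)).ne']
  exact Real.log_le_log (gseq_pos_of_mem_image hB _ hy) (gseq_add_le hX hB n m y)

theorem exists_aaOn_gseq_of_gibbsFun (hX : MeasurableSet X)
    (hXs : ∀ x ∈ X, ∀ n, shift^[n] x ∈ X) (hY : MeasurableSet ((fun x => πs ∘ x) '' X))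
    (hB : ∀ x, |f x| ≤ B) (hμ : IsInvariantOn μ X) (hμf : GibbsFun X f μ)
    (hg : GibbsFun ((fun x => πs ∘ x) '' X) g (μ.map fun x => πs ∘ x)) :
    ∃ C, 0 < C ∧ AAOn ((fun x => πs ∘ x) '' X) (gseq X πs f) C := by
  obtain ⟨P, c, hPc⟩ := exists_logGibbsBounds_map (πs := πs) hX hB hμ hμf
  obtain ⟨Q, d, hQd⟩ := (gibbsFun_iff ((hμ.map hX hY).ae_mem hY)).1 hg
  -- Comparing the two Gibbs estimates, `log g_n` is within `c + d` of an additive sequence.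
  have near_additive : ∀ y ∈ (fun x => πs ∘ x) '' X, ∀ n : ℕ, 1 ≤ n →
      |Real.log (gseq X πs f n y) - (birk g n y + n * (P - Q))| ≤ c + d := fun y hy n hn => by
    have := abs_le.1 (hPc y hy n hn).2
    have := abs_le.1 (hQd y hy n hn).2
    rw [abs_le]
    constructor <;> linarith
  refine ⟨|3 * (c + d)| + 1, by positivity, fun y hy n m hn hm => ?_⟩
  have hy' := shift_iterate_mem_image hXs hy n
  refine (exp_neg_mul_le_and_le_exp_mul_iff (gseq_pos_of_mem_image hB n hy)
    (gseq_pos_of_mem_image hB m hy') (gseq_pos_of_mem_image hB _ hy)).2 ?_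
  have head := abs_le.1 (near_additive y hy n hn)
  have tail := abs_le.1 (near_additive _ hy' m hm)
  have total := abs_le.1 (near_additive y hy (n + m) (by omega))
  rw [birk_add] at total
  push_cast at total
  have := le_abs_self (3 * (c + d))
  rw [abs_le]
  constructor <;> linarith

theorem eq_map_of_weakGibbsFun {R : Fin kX → Fin kX → Prop} (hX : IrreducibleShift (sft R))
    (hY : MeasurableSet ((fun x => πs ∘ x) '' sft R)) (hB : ∀ x, |f x| ≤ B)
    (hμ : IsInvariantOn μ (sft R)) (hμf : GibbsFun (sft R) f μ)
    (hg : WeakGibbsFun ((fun x => πs ∘ x) '' sft R) g (μ.map fun x => πs ∘ x))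
    {ν : Measure (ℕ → Fin kY)} (hν : IsInvariantOn ν ((fun x => πs ∘ x) '' sft R))
    (hνg : WeakGibbsFun ((fun x => πs ∘ x) '' sft R) g ν) : ν = μ.map fun x => πs ∘ x := by
  have := hμ.1
  have hXs : ∀ x ∈ sft R, ∀ n, shift^[n] x ∈ sft R := fun _ => shift_iterate_mem_sft
  have hm := hμ.map (measurableSet_sft R) hY
  have ergodic_map : Ergodic shift (μ.map fun x => πs ∘ x) :=
    MeasurePreserving.ergodic_of_ergodic_semiconj ⟨measurable_comp_left πs, rfl⟩
      (ergodic_of_gibbsFun hX hB hμ hμf) measurable_shift fun _ => rfl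
  obtain ⟨P, c, hPc⟩ := exists_logGibbsBounds_map (πs := πs) (measurableSet_sft R) hB hμ hμf
  exact eq_of_weakGibbsFun hY hν hm ergodic_map (Real.exp_pos (3 * c))
    (fun n l hn hl => hPc.measureReal_append_le (fun _ => shift_iterate_mem_image hXs)
      (hm.ae_mem hY) (fun _ => log_gseq_add_le hXs hB) hn hl) hg hνg

end Factor

/-! ### The three-symbol setting -/

theorem exists_eq_sft {Y : Set (ℕ → Fin 2)}
    (hY : Y = Set.univ ∨ Y = {y | ∀ n : ℕ, ¬(y n = 0 ∧ y (n + 1) = 0)}) :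
    ∃ S : Fin 2 → Fin 2 → Prop, Y = sft S ∧ ∀ i j, i = 1 ∨ j = 1 → S i j := by
  rcases hY with rfl | rfl
  · exact ⟨fun _ _ => True, by simp [sft], fun _ _ _ => trivial⟩
  · exact ⟨fun i j => ¬(i = 0 ∧ j = 0), rfl, by decide⟩

theorem abs_le_sum_of_two_coordinates {k : ℕ} {f : (ℕ → Fin k) → ℝ} {F : Fin k → Fin k → ℝ}
    (hf : ∀ x, f x = F (x 0) (x 1)) (x : ℕ → Fin k) : |f x| ≤ ∑ i, ∑ j, |F i j| := by
  rw [hf]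
  calc |F (x 0) (x 1)| ≤ ∑ j, |F (x 0) j| :=
        Finset.single_le_sum (fun j _ => abs_nonneg (F (x 0) j)) (Finset.mem_univ _)
    _ ≤ ∑ i, ∑ j, |F i j| :=
        Finset.single_le_sum (f := fun i => ∑ j, |F i j|)
          (fun i _ => Finset.sum_nonneg fun j _ => abs_nonneg (F i j)) (Finset.mem_univ _)

theorem exists_MC_eq_antidiagonal {A : Fin 3 → Fin 3 → ℕ} (hA01 : ∀ i j, A i j = 0 ∨ A i j = 1)
    (F : Fin 3 → Fin 3 → ℝ) (h11 : A 1 1 ≠ 1) (h22 : A 2 2 ≠ 1) (h12 : A 1 2 = 1)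
    (h21 : A 2 1 = 1) :
    ∃ a₁ a₂ : ℝ, 0 < a₁ ∧ 0 < a₂ ∧
      (Matrix.of fun i j : Fin 2 => MC A F i.succ j.succ) = !![(0 : ℝ), a₁; a₂, 0] := by
  refine ⟨Real.exp (F 1 2), Real.exp (F 2 1), Real.exp_pos _, Real.exp_pos _, ?_⟩
  ext i j
  fin_cases i <;> fin_cases j <;>
    simp [MC, h12, h21, (hA01 1 1).resolve_right h11, (hA01 2 2).resolve_right h22]

/-- Theorem `phd1` (i) combined with (ii): under Setting (C), if
`M_{22}|_{π^{-1}(22)}` is not of the form `[[0,a₁],[a₂,0]]` with `a₁, a₂ > 0`, then `𝓖`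
is almost additive iff `πμ` is the unique invariant Gibbs measure of some continuous
function `ĝ` on `Y`; and if `𝓖` is weakly almost additive then `πμ` is the unique
invariant weak Gibbs measure of some continuous `ĝ`. (Symbols `1,2,3` of the paper are
`0,1,2` here, and symbols `1,2` of `Y` are `0,1`.) -/
theorem stmt_15
    (A : Fin 3 → Fin 3 → ℕ) (hA01 : ∀ i j, A i j = 0 ∨ A i j = 1)
    (X : Set (ℕ → Fin 3)) (hXdef : X = {x | ∀ n : ℕ, A (x n) (x (n + 1)) = 1})
    (hXirr : IrreducibleShift X)
    (Y : Set (ℕ → Fin 2))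
    (hYdef : Y = Set.univ ∨ Y = {y | ∀ n : ℕ, ¬(y n = 0 ∧ y (n + 1) = 0)})
    (hYirr : IrreducibleShift Y)
    (hsurj : (fun x => (projC (l := 3)) ∘ x) '' X = Y)
    (F : Fin 3 → Fin 3 → ℝ) (f : (ℕ → Fin 3) → ℝ)
    (hf : ∀ x : ℕ → Fin 3, f x = F (x 0) (x 1))
    (μ : Measure (ℕ → Fin 3)) (hμinv : IsInvariantOn μ X) (hμG : GibbsFun X f μ)
    (hMsub : ¬ ∃ a₁ a₂ : ℝ, 0 < a₁ ∧ 0 < a₂ ∧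
      (Matrix.of fun i j : Fin 2 => MC A F i.succ j.succ) = !![(0 : ℝ), a₁; a₂, 0]) :
    ((∃ C : ℝ, 0 < C ∧ AAOn Y (gseq X projC f) C) ↔
      (∃ ghat : (ℕ → Fin 2) → ℝ, ContinuousOn ghat Y ∧
        IsInvariantOn (μ.map (fun x => (projC (l := 3)) ∘ x)) Y ∧
        GibbsFun Y ghat (μ.map (fun x => (projC (l := 3)) ∘ x)) ∧
        ∀ ν : Measure (ℕ → Fin 2), IsInvariantOn ν Y → GibbsFun Y ghat ν →
          ν = μ.map (fun x => (projC (l := 3)) ∘ x))) ∧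
    (WeakAAOn Y (gseq X projC f) →
      ∃ ghat : (ℕ → Fin 2) → ℝ, ContinuousOn ghat Y ∧
        IsInvariantOn (μ.map (fun x => (projC (l := 3)) ∘ x)) Y ∧
        WeakGibbsFun Y ghat (μ.map (fun x => (projC (l := 3)) ∘ x)) ∧
        ∀ ν : Measure (ℕ → Fin 2), IsInvariantOn ν Y → WeakGibbsFun Y ghat ν →
          ν = μ.map (fun x => (projC (l := 3)) ∘ x)) := by
  obtain ⟨S, hYS, hS⟩ := exists_eq_sft hYdef
  obtain rfl : X = sft fun i j => A i j = 1 := hXdef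
  have hB := abs_le_sum_of_two_coordinates hf
  obtain ⟨ghat, hcont, hclose⟩ := exists_continuous_abs_birk_sub_log_gseq_le hXirr
    (hsurj.trans hYS) hS (fun ⟨h11, h22, h12, h21⟩ =>
      hMsub (exists_MC_eq_antidiagonal hA01 F h11 h22 h12 h21)) hf hB
  have hX := measurableSet_sft fun i j => A i j = 1
  have hY : MeasurableSet Y := hYS ▸ measurableSet_sft S
  rw [← hYS] at hclose
  clear hYdef hYS
  subst hsurj
  have hinv := hμinv.map hX hY
  refine ⟨⟨?_, ?_⟩, ?_⟩
  · rintro ⟨C, -, hC⟩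
    have hgibbs := gibbsFun_map hX hY hB hμinv hμG fun n hn =>
      hclose n C fun y hy m hm => hC y hy n m hn hm
    exact ⟨ghat, hcont.continuousOn, hinv, hgibbs, fun ν hν hνg =>
      eq_map_of_weakGibbsFun hXirr hY hB hμinv hμG hgibbs.weakGibbsFun hν hνg.weakGibbsFun⟩
  · rintro ⟨g, -, -, hg, -⟩
    exact exists_aaOn_gseq_of_gibbsFun hX (fun _ => shift_iterate_mem_sft) hY hB hμinv hμG hg
  · rintro ⟨C, -, hlim, hC⟩
    have hweak := weakGibbsFun_map hX hY hB hμinv hμG hlim fun n hn =>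
      hclose n (C n) fun y hy m hm => hC y hy n m hn hm
    exact ⟨ghat, hcont.continuousOn, hinv, hweak, fun ν hν hνg =>
      eq_map_of_weakGibbsFun hXirr hY hB hμinv hμG hweak hν hνg⟩
end
end

section
/- Assume Setting (C) and suppose the sequence 𝓗 = {log h_n} is weakly almost additive on Y. If the 2×2 submatrix M_{22}|_{π^{-1}(22)} is similar over ℝ either to a Jordan block [[α, 1],[0, α]] for some α ∈ ℝ, or to a diagonal matrix diag(α, β) with β ≠ −α, then the limit lim_{n→∞} h[12^{n+1}]/h[2^{n+1}] exists and is a positive real number. -/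
open MeasureTheory Filter Topology

noncomputable section

open scoped Classical

/-!
Reading a word of `Y` from the left multiplies by blocks of `M`. Writing `B` for the block of `M`
over `22` and `e` for the indicator of the symbols that begin a point of `X`, this gives
`h[12^{n+1}] = w ⬝ᵥ B ^ n *ᵥ e` and `h[2^{n+1}] = 1 ⬝ᵥ B ^ n *ᵥ e` for `n ≥ 1`, where `w` is the row
of `M` from `1` into `{2, 3}`. In each of the allowed normal forms `B ^ n = φ n • U + ψ n • V` with
`ψ = o(φ)`, so both quantities lie in the span of `φ` and `ψ`. Splitting after the first symbol,
weak almost additivity makes them of the same order. Either the denominator has a `φ`-component, and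
the quotient tends to the quotient of the `φ`-components, or neither has one, and the quotient is
eventually constant. The eigenvalues `α, -α` are excluded because neither of `α ^ n` and `(-α) ^ n`
dominates the other.
-/

open Asymptotics Matrix

section Quotients

variable {ι 𝕜 : Type*} [NormedField 𝕜] {l : Filter ι} [l.NeBot]

lemma eq_zero_of_const_mul_isLittleO {φ : ι → 𝕜} {a : 𝕜} (hφ : ∀ᶠ x in l, φ x ≠ 0)
    (h : (fun x => a * φ x) =o[l] φ) : a = 0 := by
  by_contra ha
  have hself : φ =o[l] φ := (isLittleO_const_mul_left_iff ha).1 h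
  exact isLittleO_irrefl hφ.frequently hself

lemma exists_tendsto_div_of_isLittleO_of_isBigO {φ ψ : ι → 𝕜} {a b c d : 𝕜} (hψ : ψ =o[l] φ)
    (hO : (fun x => a * φ x + b * ψ x) =O[l] fun x => c * φ x + d * ψ x)
    (hne : ∀ᶠ x in l, c * φ x + d * ψ x ≠ 0) :
    ∃ L, Tendsto (fun x => (a * φ x + b * ψ x) / (c * φ x + d * ψ x)) l (𝓝 L) := by
  have hφ : ∀ᶠ x in l, φ x ≠ 0 := by
    filter_upwards [hne, hψ.eventuallyLE] with x hx hle hφx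
    have hψx : ψ x = 0 := by simpa [hφx] using hle
    simp [hφx, hψx] at hx
  rcases eq_or_ne c 0 with rfl | hc
  · have ha : a = 0 := by
      refine eq_zero_of_const_mul_isLittleO hφ ?_
      have hs : (fun x => a * φ x + b * ψ x) =o[l] φ :=
        hO.trans_isLittleO (by simpa using hψ.const_mul_left d)
      simpa using hs.sub (hψ.const_mul_left b)
    refine ⟨b / d, tendsto_const_nhds.congr' ?_⟩
    filter_upwards [hne] with x hx
    have hψx : ψ x ≠ 0 := by rintro h; simp [h] at hx
    simp [ha, mul_div_mul_right _ _ hψx]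
  · have hratio : ∀ u v : 𝕜, Tendsto (fun x => u + v * (ψ x / φ x)) l (𝓝 u) := fun u v => by
      simpa using (hψ.tendsto_div_nhds_zero.const_mul v).const_add u
    refine ⟨a / c, ((hratio a b).div (hratio c d) hc).congr' ?_⟩
    filter_upwards [hφ] with x hx
    rw [Pi.div_apply, ← mul_div_mul_right _ _ hx]
    congr 1 <;> field_simp

lemma ne_zero_of_tendsto_div_of_isBigO {s t : ι → 𝕜} {L : 𝕜}
    (hL : Tendsto (fun x => s x / t x) l (𝓝 L)) (hts : t =O[l] s) (hne : ∀ᶠ x in l, t x ≠ 0) :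
    L ≠ 0 := by
  rintro rfl
  have hst : s =o[l] t := (isLittleO_iff_tendsto' (hne.mono fun x hx h => absurd h hx)).2 hL
  exact isLittleO_irrefl hne.frequently (hts.trans_isLittleO hst)

end Quotients

section TwoScalePowers

variable {ι : Type*} [Fintype ι] [DecidableEq ι]

/-- The powers of `B` are combinations of two fixed matrices whose scalar coefficients have
different orders of growth. -/
def HasTwoScalePowers (B : Matrix ι ι ℝ) : Prop :=
  ∃ (φ ψ : ℕ → ℝ) (U V : Matrix ι ι ℝ), ψ =o[atTop] φ ∧ ∀ n, B ^ n = φ n • U + ψ n • V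

lemma HasTwoScalePowers.exists_tendsto_dotProduct_div {B : Matrix ι ι ℝ}
    (hB : HasTwoScalePowers B) {v w e : ι → ℝ}
    (hO : (fun n : ℕ => w ⬝ᵥ B ^ n *ᵥ e) =O[atTop] fun n => v ⬝ᵥ B ^ n *ᵥ e)
    (hne : ∀ᶠ n : ℕ in atTop, v ⬝ᵥ B ^ n *ᵥ e ≠ 0) :
    ∃ L, Tendsto (fun n : ℕ => w ⬝ᵥ B ^ n *ᵥ e / v ⬝ᵥ B ^ n *ᵥ e) atTop (𝓝 L) := by
  obtain ⟨φ, ψ, U, V, hψ, hpow⟩ := hB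
  have hdot : ∀ (u : ι → ℝ) (n : ℕ),
      u ⬝ᵥ B ^ n *ᵥ e = (u ⬝ᵥ U *ᵥ e) * φ n + (u ⬝ᵥ V *ᵥ e) * ψ n := fun u n => by
    simp only [hpow, add_mulVec, smul_mulVec, dotProduct_add, dotProduct_smul, smul_eq_mul,
      mul_comm]
  simp only [hdot] at hO hne ⊢
  exact exists_tendsto_div_of_isLittleO_of_isBigO hψ hO hne

lemma HasTwoScalePowers.of_conj {B P : Matrix ι ι ℝ} (hP : IsUnit P.det)
    (h : HasTwoScalePowers (P⁻¹ * B * P)) : HasTwoScalePowers B := by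
  obtain ⟨φ, ψ, U, V, hψ, hpow⟩ := h
  refine ⟨φ, ψ, P * U * P⁻¹, P * V * P⁻¹, hψ, fun n => ?_⟩
  have hsemiconj : SemiconjBy P (P⁻¹ * B * P) B := by
    rw [SemiconjBy, Matrix.mul_assoc P⁻¹, mul_nonsing_inv_cancel_left _ _ hP]
  calc B ^ n = B ^ n * P * P⁻¹ := (mul_nonsing_inv_cancel_right _ _ hP).symm
    _ = P * (φ n • U + ψ n • V) * P⁻¹ := by rw [← (hsemiconj.pow_right n).eq, hpow]
    _ = φ n • (P * U * P⁻¹) + ψ n • (P * V * P⁻¹) := by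
      simp only [Matrix.mul_add, Matrix.add_mul, Matrix.mul_smul, Matrix.smul_mul]

lemma fin_two_diagonal_pow (α β : ℝ) (n : ℕ) :
    !![α, 0; 0, β] ^ n = α ^ n • !![1, 0; 0, 0] + β ^ n • !![0, 0; 0, 1] := by
  induction n with
  | zero => simp [one_fin_two]
  | succ n ih => rw [pow_succ, ih]; simp [pow_succ]

lemma fin_two_jordan_pow (α : ℝ) (n : ℕ) :
    !![α, 1; 0, α] ^ n = (n * α ^ (n - 1)) • !![0, 1; 0, 0] + α ^ n • 1 := by
  induction n with
  | zero => simp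
  | succ n ih =>
    rw [pow_succ, ih]
    cases n with
    | zero => simp [one_fin_two]
    | succ n =>
      have hcorner : α ^ n * α + (n + 1) * α ^ n * α = (n + 1 + 1) * (α ^ n * α) := by ring
      simpa [one_fin_two, pow_succ] using hcorner

lemma pow_isLittleO_natCast_mul_pow_pred (α : ℝ) :
    (fun n : ℕ => α ^ n) =o[atTop] fun n : ℕ => n * α ^ (n - 1) := by
  have hpred : (fun n : ℕ => α ^ (n - 1)) =o[atTop] fun n : ℕ => n * α ^ (n - 1) := by
    have hone : (fun _ : ℕ => (1 : ℝ)) =o[atTop] fun n : ℕ => (n : ℝ) :=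
      isLittleO_const_left.2 (.inr (tendsto_norm_atTop_atTop.comp tendsto_natCast_atTop_atTop))
    simpa using hone.mul_isBigO (isBigO_refl (fun n : ℕ => α ^ (n - 1)) atTop)
  refine (hpred.const_mul_left α).congr' ?_ .rfl
  filter_upwards [eventually_ge_atTop 1] with n hn
  rw [mul_pow_sub_one (by omega)]

lemma hasTwoScalePowers_jordan (α : ℝ) : HasTwoScalePowers !![α, 1; 0, α] :=
  ⟨_, _, _, _, pow_isLittleO_natCast_mul_pow_pred α, fin_two_jordan_pow α⟩

lemma hasTwoScalePowers_diagonal {α β : ℝ} (hβ : β ≠ -α) : HasTwoScalePowers !![α, 0; 0, β] := by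
  rcases lt_trichotomy |β| |α| with hlt | heq | hlt
  · exact ⟨_, _, _, _, isLittleO_pow_pow_of_abs_lt_left hlt, fin_two_diagonal_pow α β⟩
  · obtain rfl : β = α := (abs_eq_abs.1 heq).resolve_right hβ
    refine ⟨fun n => β ^ n, 0, 1, 0, isLittleO_zero _ _, fun n => ?_⟩
    simp [fin_two_diagonal_pow, one_fin_two]
  · exact ⟨_, _, _, _, isLittleO_pow_pow_of_abs_lt_left hlt,
      fun n => (fin_two_diagonal_pow α β n).trans (add_comm _ _)⟩

lemma hasTwoScalePowers_of_similar2 {B : Matrix (Fin 2) (Fin 2) ℝ}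
    (h : (∃ α : ℝ, Similar2 B !![α, 1; 0, α]) ∨
      ∃ α β : ℝ, β ≠ -α ∧ Similar2 B !![α, 0; 0, β]) : HasTwoScalePowers B := by
  rcases h with ⟨α, P, hP, hconj⟩ | ⟨α, β, hβ, P, hP, hconj⟩
  · exact .of_conj hP (hconj ▸ hasTwoScalePowers_jordan α)
  · exact .of_conj hP (hconj ▸ hasTwoScalePowers_diagonal hβ)

end TwoScalePowers

section WeakAlmostAdditivity

variable {S : Type*} {X : Set (ℕ → S)} {f : ℕ → (ℕ → S) → ℝ} {x : ℕ → S} {k : ℕ}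

lemma WeakAAOn.exists_bounds (h : WeakAAOn X f) (hx : x ∈ X) (hk : 1 ≤ k) :
    ∃ c K : ℝ, 0 < c ∧ ∀ m, 1 ≤ m → 0 ≤ f k x * f m (shift^[k] x) ∧
      c * (f k x * f m (shift^[k] x)) ≤ f (m + k) x ∧
      f (m + k) x ≤ K * (f k x * f m (shift^[k] x)) := by
  obtain ⟨C, hC, -, hbounds⟩ := h
  refine ⟨Real.exp (-C k), Real.exp (C k), Real.exp_pos _, fun m hm => ?_⟩
  obtain ⟨hlow, hup⟩ := hbounds x hx k m hk hm
  rw [add_comm k m] at hlow hup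
  have hexp : Real.exp (-C k) < Real.exp (C k) := Real.exp_lt_exp.2 (by linarith [hC k hk])
  have hnonneg : 0 ≤ f k x * f m (shift^[k] x) := by nlinarith [hlow.trans hup]
  exact ⟨hnonneg, hlow, hup⟩

lemma WeakAAOn.isTheta_iterate_shift (h : WeakAAOn X f) (hx : x ∈ X) (hk : 1 ≤ k)
    (hne : ∃ m, 1 ≤ m ∧ f (m + k) x ≠ 0) :
    (fun m => f (m + k) x) =Θ[atTop] fun m => f m (shift^[k] x) := by
  obtain ⟨c, K, hc, hbounds⟩ := h.exists_bounds hx hk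
  have hfk : f k x ≠ 0 := by
    obtain ⟨m, hm, hmk⟩ := hne
    obtain ⟨-, hlow, hup⟩ := hbounds m hm
    intro hzero
    simp only [hzero, zero_mul, mul_zero] at hlow hup
    exact hmk (le_antisymm hup hlow)
  have hprod : (fun m => f (m + k) x) =Θ[atTop] fun m => f k x * f m (shift^[k] x) := by
    constructor
    · refine .of_bound K ?_
      filter_upwards [eventually_ge_atTop 1] with m hm
      obtain ⟨hnonneg, hlow, hup⟩ := hbounds m hm
      rwa [Real.norm_of_nonneg ((by positivity : (0 : ℝ) ≤ _).trans hlow),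
        Real.norm_of_nonneg hnonneg]
    · refine .of_bound c⁻¹ ?_
      filter_upwards [eventually_ge_atTop 1] with m hm
      obtain ⟨hnonneg, hlow, -⟩ := hbounds m hm
      rw [Real.norm_of_nonneg ((by positivity : (0 : ℝ) ≤ _).trans hlow),
        Real.norm_of_nonneg hnonneg, ← div_eq_inv_mul, le_div_iff₀' hc]
      exact hlow
  exact (isTheta_const_mul_right hfk).1 hprod

end WeakAlmostAdditivity

section FiberSums

variable {l : ℕ}

/-- The one-sided vertex shift of the transition matrix `A`. -/
def vertexShift (A : Fin l → Fin l → ℕ) : Set (ℕ → Fin l) :=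
  {x | ∀ n, A (x n) (x (n + 1)) = 1}

/-- The potential `F(u_0, u_1) + ⋯ + F(u_{n-1}, u_n)` of a word of length `n + 1`, written as in
`hseqC`. -/
def wordPotential (F : Fin l → Fin l → ℝ) {n : ℕ} (u : Fin (n + 1) → Fin l) : ℝ :=
  ∑ i : Fin (n + 1), if h : (i + 1 : ℕ) < n + 1 then F (u i) (u ⟨i + 1, h⟩) else 0

/-- The contribution of the word `u` of length `n + 1` to `h_{n+1}(y)`: its exponentiated potential
if `u` is a block of `X` lying over `y`, and zero otherwise. -/
def fiberWeight (X : Set (ℕ → Fin l)) (πs : Fin l → Fin 2) (F : Fin l → Fin l → ℝ) {n : ℕ}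
    (y : ℕ → Fin 2) (u : Fin (n + 1) → Fin l) : ℝ :=
  if (∃ x ∈ X, ∀ i : Fin (n + 1), x i = u i) ∧ ∀ i : Fin (n + 1), πs (u i) = y i then
    Real.exp (wordPotential F u)
  else 0

/-- The part of `h_{n+1}(y)` coming from the words that start with the symbol `a`. The length is
shifted so that `n` counts transitions. -/
def fiberSum (X : Set (ℕ → Fin l)) (πs : Fin l → Fin 2) (F : Fin l → Fin l → ℝ) (n : ℕ)
    (y : ℕ → Fin 2) (a : Fin l) : ℝ :=
  ∑ u : Fin n → Fin l, fiberWeight X πs F y (Fin.cons a u : Fin (n + 1) → Fin l)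

lemma sum_fin_succ_pi {S M : Type*} [Fintype S] [AddCommMonoid M] {n : ℕ}
    (g : (Fin (n + 1) → S) → M) : ∑ u, g u = ∑ a, ∑ u : Fin n → S, g (Fin.cons a u) := by
  rw [← (Fin.consEquiv fun _ => S).sum_comp, Fintype.sum_prod_type]
  rfl

lemma shift_mem_vertexShift {A : Fin l → Fin l → ℕ} {x : ℕ → Fin l} (hx : x ∈ vertexShift A) :
    shift x ∈ vertexShift A :=
  fun n => hx (n + 1)

lemma exists_mem_vertexShift_cons_iff {A : Fin l → Fin l → ℕ} {n : ℕ} {a : Fin l}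
    {z : Fin (n + 1) → Fin l} :
    (∃ x ∈ vertexShift A, ∀ i : Fin (n + 2), x i = (Fin.cons a z : Fin (n + 2) → Fin l) i) ↔
      A a (z 0) = 1 ∧ ∃ x ∈ vertexShift A, ∀ i : Fin (n + 1), x i = z i := by
  constructor
  · rintro ⟨x, hx, hprefix⟩
    have hhead : x 0 = a := hprefix 0
    have htail : ∀ i : Fin (n + 1), x (i + 1) = z i := fun i => hprefix i.succ
    exact ⟨hhead ▸ htail 0 ▸ hx 0, shift x, shift_mem_vertexShift hx, htail⟩
  · rintro ⟨haz, x, hx, hprefix⟩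
    refine ⟨fun i => Nat.casesOn i a x, ?_, Fin.cases rfl hprefix⟩
    rintro (_ | k)
    · rwa [← hprefix 0] at haz
    · exact hx k

lemma wordPotential_cons (F : Fin l → Fin l → ℝ) {n : ℕ} (a : Fin l) (z : Fin (n + 1) → Fin l) :
    wordPotential F (Fin.cons a z : Fin (n + 2) → Fin l) = F a (z 0) + wordPotential F z := by
  rw [wordPotential, Fin.sum_univ_succ]
  congr 1
  refine Finset.sum_congr rfl fun i _ => ?_
  simp only [Fin.val_succ, add_lt_add_iff_right, Fin.cons_succ]
  rfl

lemma fiberWeight_cons {A : Fin l → Fin l → ℕ} (hA : ∀ i j, A i j = 0 ∨ A i j = 1)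
    (πs : Fin l → Fin 2) (F : Fin l → Fin l → ℝ) {n : ℕ} (y : ℕ → Fin 2) (a : Fin l)
    (z : Fin (n + 1) → Fin l) :
    fiberWeight (vertexShift A) πs F y (Fin.cons a z : Fin (n + 2) → Fin l) =
      if πs a = y 0 then MC A F a (z 0) * fiberWeight (vertexShift A) πs F (shift y) z else 0 := by
  have hproj : (∀ i : Fin (n + 2), πs ((Fin.cons a z : Fin (n + 2) → Fin l) i) = y i) ↔
      πs a = y 0 ∧ ∀ i : Fin (n + 1), πs (z i) = shift y i := Fin.forall_fin_succ
  simp only [fiberWeight, exists_mem_vertexShift_cons_iff, hproj, wordPotential_cons, Real.exp_add,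
    MC]
  rcases hA a (z 0) with haz | haz <;> by_cases hya : πs a = y 0 <;> simp [haz, hya]

lemma fiberSum_succ {A : Fin l → Fin l → ℕ} (hA : ∀ i j, A i j = 0 ∨ A i j = 1)
    (πs : Fin l → Fin 2) (F : Fin l → Fin l → ℝ) (n : ℕ) (y : ℕ → Fin 2) (a : Fin l) :
    fiberSum (vertexShift A) πs F (n + 1) y a =
      if πs a = y 0 then ∑ b, MC A F a b * fiberSum (vertexShift A) πs F n (shift y) b
      else 0 := by
  simp only [fiberSum, sum_fin_succ_pi, fiberWeight_cons hA, Fin.cons_zero]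
  split_ifs <;> simp [Finset.mul_sum]

variable {X : Set (ℕ → Fin l)} {πs : Fin l → Fin 2} {F : Fin l → Fin l → ℝ}

lemma fiberSum_eq_zero {y : ℕ → Fin 2} {a : Fin l} (ha : πs a ≠ y 0) (n : ℕ) :
    fiberSum X πs F n y a = 0 :=
  Finset.sum_eq_zero fun _ _ => if_neg fun h => ha (h.2 0)

variable {f : (ℕ → Fin l) → ℝ}

lemma hseqC_add_two (n : ℕ) (y : ℕ → Fin 2) :
    hseqC X πs F f (n + 2) y = ∑ a, fiberSum X πs F (n + 1) y a := by
  rw [hseqC, if_neg (by omega)]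
  exact sum_fin_succ_pi (fiberWeight X πs F y)

lemma hseqC_nonneg (n : ℕ) (y : ℕ → Fin 2) : 0 ≤ hseqC X πs F f n y := by
  rw [hseqC]
  split_ifs
  · refine Finset.sum_nonneg fun a _ => ?_
    split_ifs
    exacts [Real.iSup_nonneg fun _ => (Real.exp_pos _).le, le_rfl]
  · refine Finset.sum_nonneg fun u _ => ?_
    split_ifs
    exacts [(Real.exp_pos _).le, le_rfl]

lemma hseqC_add_two_pos {y : ℕ → Fin 2} (hy : y ∈ (fun x => πs ∘ x) '' X) (n : ℕ) :
    0 < hseqC X πs F f (n + 2) y := by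
  obtain ⟨x, hx, rfl⟩ := hy
  rw [hseqC, if_neg (by omega)]
  refine Finset.sum_pos' (fun u _ => by split_ifs <;> positivity)
    ⟨fun i => x i, Finset.mem_univ _, ?_⟩
  rw [if_pos ⟨⟨x, hx, fun _ => rfl⟩, fun _ => rfl⟩]
  exact Real.exp_pos _

lemma hseqC_isTheta_shift (h : WeakAAOn ((fun x => πs ∘ x) '' X) (hseqC X πs F f))
    {y : ℕ → Fin 2} (hy : y ∈ (fun x => πs ∘ x) '' X) :
    (fun n => hseqC X πs F f (n + 2) y) =Θ[atTop] fun n => hseqC X πs F f (n + 1) (shift y) := by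
  have hΘ := h.isTheta_iterate_shift hy le_rfl ⟨1, le_rfl, (hseqC_add_two_pos hy 0).ne'⟩
  exact ⟨hΘ.1.comp_tendsto (tendsto_add_atTop_nat 1), hΘ.2.comp_tendsto (tendsto_add_atTop_nat 1)⟩

end FiberSums

section CollapsingMap

variable {l : ℕ}

/-- The block of `M` over the word `22` of `Y`, that is `M` restricted to the symbols other than
`0`. -/
def fiberMatrix (A : Fin (l + 1) → Fin (l + 1) → ℕ) (F : Fin (l + 1) → Fin (l + 1) → ℝ) :
    Matrix (Fin l) (Fin l) ℝ :=
  Matrix.of fun i j => MC A F i.succ j.succ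

lemma projC_zero : projC (0 : Fin (l + 1)) = 0 := rfl

lemma projC_succ (j : Fin l) : projC j.succ = 1 := by simp [projC]

lemma shift_const {S : Type*} (a : S) : shift (fun _ => a) = fun _ => a := rfl

lemma shift_ite_eq_zero : shift (fun i => if i = 0 then 0 else 1 : ℕ → Fin 2) = fun _ => 1 := by
  funext i
  simp [shift]

lemma fiberSum_one_zero {X : Set (ℕ → Fin (l + 1))} {F : Fin (l + 1) → Fin (l + 1) → ℝ} (n : ℕ) :
    fiberSum X projC F n (fun _ => 1) 0 = 0 :=
  fiberSum_eq_zero (by simp [projC_zero]) n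

variable {A : Fin (l + 1) → Fin (l + 1) → ℕ}

lemma fiberSum_one_succ (hA : ∀ i j, A i j = 0 ∨ A i j = 1) (F : Fin (l + 1) → Fin (l + 1) → ℝ)
    (n : ℕ) :
    (fun j : Fin l => fiberSum (vertexShift A) projC F n (fun _ => 1) j.succ) =
      fiberMatrix A F ^ n *ᵥ fun j => fiberSum (vertexShift A) projC F 0 (fun _ => 1) j.succ := by
  induction n with
  | zero => rw [pow_zero, one_mulVec]
  | succ n ih =>
    rw [pow_succ', ← mulVec_mulVec, ← ih]
    funext j
    rw [fiberSum_succ hA, if_pos (projC_succ j), Fin.sum_univ_succ, shift_const,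
      fiberSum_one_zero, mul_zero, zero_add]
    rfl

lemma hseqC_one_eq_dotProduct (hA : ∀ i j, A i j = 0 ∨ A i j = 1)
    (F : Fin (l + 1) → Fin (l + 1) → ℝ) (f : (ℕ → Fin (l + 1)) → ℝ) {n : ℕ} (hn : 1 ≤ n) :
    hseqC (vertexShift A) projC F f (n + 1) (fun _ => 1) =
      1 ⬝ᵥ fiberMatrix A F ^ n *ᵥ
        fun j => fiberSum (vertexShift A) projC F 0 (fun _ => 1) j.succ := by
  obtain ⟨m, rfl⟩ := Nat.exists_eq_add_of_le' hn
  rw [← fiberSum_one_succ hA, one_dotProduct, hseqC_add_two, Fin.sum_univ_succ, fiberSum_one_zero,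
    zero_add]

lemma hseqC_zero_one_eq_dotProduct (hA : ∀ i j, A i j = 0 ∨ A i j = 1)
    (F : Fin (l + 1) → Fin (l + 1) → ℝ) (f : (ℕ → Fin (l + 1)) → ℝ) (n : ℕ) :
    hseqC (vertexShift A) projC F f (n + 2) (fun i => if i = 0 then 0 else 1) =
      (fun j : Fin l => MC A F 0 j.succ) ⬝ᵥ fiberMatrix A F ^ n *ᵥ
        fun j => fiberSum (vertexShift A) projC F 0 (fun _ => 1) j.succ := by
  have hsucc : ∀ j : Fin l, fiberSum (vertexShift A) projC F (n + 1)
      (fun i => if i = 0 then 0 else 1) j.succ = 0 := fun j =>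
    fiberSum_eq_zero (by simp [projC_succ]) _
  rw [← fiberSum_one_succ hA, hseqC_add_two, Fin.sum_univ_succ,
    Finset.sum_eq_zero fun j _ => hsucc j, add_zero, fiberSum_succ hA,
    if_pos (by simp [projC_zero]), shift_ite_eq_zero, Fin.sum_univ_succ, fiberSum_one_zero,
    mul_zero, zero_add]
  rfl

lemma mem_of_tail_eq_one {Y : Set (ℕ → Fin 2)}
    (hY : Y = Set.univ ∨ Y = {y | ∀ n : ℕ, ¬(y n = 0 ∧ y (n + 1) = 0)}) {y : ℕ → Fin 2}
    (hy : ∀ n, y (n + 1) = 1) : y ∈ Y := by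
  rcases hY with rfl | rfl
  · exact Set.mem_univ y
  · rintro n ⟨-, hzero⟩
    simp [hy n] at hzero

theorem stmt_16_general (hA : ∀ i j, A i j = 0 ∨ A i j = 1) (F : Fin (l + 1) → Fin (l + 1) → ℝ)
    (hM : HasTwoScalePowers (fiberMatrix A F))
    (hone : (fun _ => 1) ∈ (fun x => projC ∘ x) '' vertexShift A)
    (hΘ : (fun n => hseqC (vertexShift A) projC F (fun x => F (x 0) (x 1)) (n + 2)
        (fun i => if i = 0 then 0 else 1)) =Θ[atTop]
      fun n => hseqC (vertexShift A) projC F (fun x => F (x 0) (x 1)) (n + 1) (fun _ => 1)) :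
    ∃ L : ℝ, 0 < L ∧
      Tendsto (fun n : ℕ =>
          hseqC (vertexShift A) projC F (fun x => F (x 0) (x 1)) (n + 2)
              (fun i => if i = 0 then 0 else 1) /
            hseqC (vertexShift A) projC F (fun x => F (x 0) (x 1)) (n + 1) (fun _ => 1))
        atTop (𝓝 L) := by
  set f : (ℕ → Fin (l + 1)) → ℝ := fun x => F (x 0) (x 1)
  have hone_eq : (fun n => hseqC (vertexShift A) projC F f (n + 1) (fun _ => 1)) =ᶠ[atTop] _ :=
    (eventually_ge_atTop 1).mono fun n hn => hseqC_one_eq_dotProduct hA F f hn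
  have hne : ∀ᶠ n in atTop, hseqC (vertexShift A) projC F f (n + 1) (fun _ => 1) ≠ 0 := by
    filter_upwards [eventually_ge_atTop 1] with n hn
    obtain ⟨m, rfl⟩ := Nat.exists_eq_add_of_le' hn
    exact (hseqC_add_two_pos hone m).ne'
  obtain ⟨L, hL⟩ := hM.exists_tendsto_dotProduct_div
    (hΘ.isBigO.congr' (.of_forall (hseqC_zero_one_eq_dotProduct hA F f)) hone_eq)
    (by filter_upwards [hne, hone_eq] with n hn heq using heq ▸ hn)
  have hlim : Tendsto (fun n => hseqC (vertexShift A) projC F f (n + 2)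
      (fun i => if i = 0 then 0 else 1) /
        hseqC (vertexShift A) projC F f (n + 1) (fun _ => 1)) atTop (𝓝 L) := by
    refine hL.congr' ?_
    filter_upwards [hone_eq] with n hn
    rw [hseqC_zero_one_eq_dotProduct hA, hn]
  have hL_nonneg : 0 ≤ L :=
    ge_of_tendsto' hlim fun n => div_nonneg (hseqC_nonneg _ _) (hseqC_nonneg _ _)
  have hL_ne : L ≠ 0 := ne_zero_of_tendsto_div_of_isBigO hlim hΘ.isBigO_symm hne
  exact ⟨L, hL_nonneg.lt_of_ne' hL_ne, hlim⟩

end CollapsingMap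

/-- Lemma `12inf`: under Setting (C), if `𝓗 = {log h_n}` is weakly
almost additive and `M_{22}|_{π^{-1}(22)}` is similar over `ℝ` to a Jordan block
`[[α,1],[0,α]]` or to `diag(α,β)` with `β ≠ −α`, then `lim h[12^{n+1}]/h[2^{n+1}]`
exists and is a positive real. (Symbols `1,2,3` of the paper are `0,1,2` here, and
symbols `1,2` of `Y` are `0,1`.) -/
theorem stmt_16
    (A : Fin 3 → Fin 3 → ℕ) (hA01 : ∀ i j, A i j = 0 ∨ A i j = 1)
    (X : Set (ℕ → Fin 3)) (hXdef : X = {x | ∀ n : ℕ, A (x n) (x (n + 1)) = 1})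
    (hXirr : IrreducibleShift X)
    (Y : Set (ℕ → Fin 2))
    (hYdef : Y = Set.univ ∨ Y = {y | ∀ n : ℕ, ¬(y n = 0 ∧ y (n + 1) = 0)})
    (hYirr : IrreducibleShift Y)
    (hsurj : (fun x => (projC (l := 3)) ∘ x) '' X = Y)
    (F : Fin 3 → Fin 3 → ℝ) (f : (ℕ → Fin 3) → ℝ)
    (hf : ∀ x : ℕ → Fin 3, f x = F (x 0) (x 1))
    (hWAA : WeakAAOn Y (hseqC X projC F f))
    (hsim : (∃ α : ℝ, Similar2 (Matrix.of fun i j : Fin 2 => MC A F i.succ j.succ)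
        !![α, 1; 0, α]) ∨
      (∃ α β : ℝ, β ≠ -α ∧ Similar2 (Matrix.of fun i j : Fin 2 => MC A F i.succ j.succ)
        !![α, 0; 0, β])) :
    ∃ L : ℝ, 0 < L ∧
      Tendsto (fun n : ℕ =>
          hseqC X projC F f (n + 2) (fun i => if i = 0 then 0 else 1) /
            hseqC X projC F f (n + 1) (fun _ => 1)) atTop (𝓝 L) := by
  subst hXdef hsurj
  obtain rfl : f = fun x => F (x 0) (x 1) := funext hf
  refine stmt_16_general hA01 F (hasTwoScalePowers_of_similar2 hsim)
    (mem_of_tail_eq_one hYdef fun _ => rfl) ?_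
  rw [← shift_ite_eq_zero]
  exact hseqC_isTheta_shift hWAA (mem_of_tail_eq_one hYdef fun _ => if_neg (Nat.succ_ne_zero _))
end
end
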